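/- arXiv:2212.06961 — 6 statements merged into one kernel-verified Lean document; each statement's English description precedes it below -/
import Mathlib

section
/- Let d ≥ 2 be an integer and 0 < t₁ < t₂ ≤ d/(d−1). Suppose α ∈ (0,1] and f : G_{t₂,d} → ℝ^d is α-Hölder (i.e. there exists c > 0 with ‖f(x) − f(y)‖ ≤ c‖x − y‖^α for all x, y ∈ G_{t₂,d}) and satisfies f(G_{t₂,d}) ⊇ G_{t₁,d}. Then α ≤ ((d−1)t₂ + t₁)/(d t₂). The same conclusion holds if G_{t₁,d} is replaced by F_{t₁,d} or G_{t₂,d} is replaced by F_{t₂,d}. -/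
/-!
Write `d = n + 1`, `s = t₁`, `t = t₂`. The obstruction is visible at the scale where the points of
`F_{t,d}` with denominator at most `Q` are treated as isolated points.

For every `Q`, the set `F_{t,d}` is covered by at most `Q^d` single points (denominators at most `Q`)
together with `O(Q^{tn})` cubes of side `Q^{-t}` (the slab containing everything else). Images of
points are points, and images of the cubes have diameter `O(Q^{-tα})`. Hence `G_{s,d}` would be
covered by `Q^d` points and `O(Q^{tn})` sets of diameter `r = O(Q^{-β})`, for any `β ≤ tα`.

This is impossible if `β d > n t + s`. Consider the points of `G_{s,d}` whose denominator is a prime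
`q ∈ (L, P]` and whose numerators are at most `L`, where `P = Q^a`, `L ≈ Q^b` and `1 < b < a` are
close to `1`. By Chebyshev's bound there are about `Q^{bd}` of these, many more than `Q^d`, so most of
them lie in the sets of diameter `r`. By Cauchy–Schwarz many pairs of them are then `r`-close. But
`|q^{-s} - q'^{-s}| ≤ r` forces `|q - q'| = O(r P^{s+1})`, and for distinct primes `q, q'` the number
of pairs `(p, p')` with `|p/q - p'/q'| ≤ r` is at most `2 r P²`, since `p q' - p' q` is a nonzero
integer determining the pair. The resulting upper bound for the number of close pairs
(`card_close_pairs`) contradicts the lower one for large `Q`, provided `β < 1 + s`; this can be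
arranged since `tn ≤ d` gives `(nt + s)/d < 1 + s`.

The inequality for fixed `Q` is `counting`; the choice of exponents is made in the final proof.
-/


open Set MeasureTheory Filter

noncomputable section

/-- Minimal number of closed axis-parallel cubes of side length `δ` needed to cover `S`. -/
def cubeCoverNum (n : ℕ) (δ : ℝ) (S : Set (EuclideanSpace ℝ (Fin n))) : ℕ :=
  sInf {m : ℕ | ∃ c : Fin m → (Fin n → ℝ),
    S ⊆ ⋃ i, {z : EuclideanSpace ℝ (Fin n) | ∀ j, z j ∈ Set.Icc (c i j) (c i j + δ)}}

-- The popcorn pyramid function `f_{t,d}` on `[0,1]^{d-1}`.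
open Classical in
def popcornFun (t : ℝ) (d : ℕ) (x : Fin (d-1) → ℝ) : ℝ :=
  if h : ∃ q : ℕ, ∃ p : Fin (d-1) → ℕ,
      (∀ i, 1 ≤ p i ∧ p i < q ∧ Nat.Coprime (p i) q) ∧ (∀ i, x i = (p i : ℝ) / (q : ℝ))
  then (h.choose : ℝ) ^ (-t)
  else 0

/-- The graph `G_{t,d}` of the popcorn pyramid function, as a subset of `ℝ^d`. -/
def Gset (t : ℝ) (d : ℕ) : Set (EuclideanSpace ℝ (Fin d)) :=
  {z | ∃ x : Fin (d-1) → ℝ, (∀ i, x i ∈ Set.Icc (0:ℝ) 1) ∧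
    (∀ i : Fin (d-1), z (Fin.castLE (Nat.sub_le d 1) i) = x i) ∧
    (∀ j : Fin d, (j : ℕ) = d - 1 → z j = popcornFun t d x)}

/-- The set `F_{t,d} ⊆ ℝ^d`. -/
def Fset (t : ℝ) (d : ℕ) : Set (EuclideanSpace ℝ (Fin d)) :=
  {z | ∃ q : ℕ, ∃ p : Fin (d-1) → ℕ, (∀ i, 1 ≤ p i ∧ p i < q) ∧
      (∀ i : Fin (d-1), z (Fin.castLE (Nat.sub_le d 1) i) = (p i : ℝ) / (q : ℝ)) ∧
      (∀ j : Fin d, (j : ℕ) = d - 1 → z j = (q : ℝ) ^ (-t))} ∪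
  {z | (∀ i : Fin (d-1), z (Fin.castLE (Nat.sub_le d 1) i) ∈ Set.Icc (0:ℝ) 1) ∧
    (∀ j : Fin d, (j : ℕ) = d - 1 → z j = 0)}

/-- Upper box dimension, via covering numbers by closed cubes. -/
def upperBoxDim (n : ℕ) (S : Set (EuclideanSpace ℝ (Fin n))) : ℝ :=
  limsup (fun δ : ℝ => Real.log (cubeCoverNum n δ S) / (-Real.log δ)) (nhdsWithin 0 (Set.Ioi 0))

/-- Lower box dimension, via covering numbers by closed cubes. -/
def lowerBoxDim (n : ℕ) (S : Set (EuclideanSpace ℝ (Fin n))) : ℝ :=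
  liminf (fun δ : ℝ => Real.log (cubeCoverNum n δ S) / (-Real.log δ)) (nhdsWithin 0 (Set.Ioi 0))

/-- Assouad dimension. -/
def assouadDim (n : ℕ) (S : Set (EuclideanSpace ℝ (Fin n))) : ℝ :=
  sInf {α : ℝ | ∃ C : ℝ, 0 < C ∧ ∀ x ∈ S, ∀ r R : ℝ, 0 < r → r < R →
    (cubeCoverNum n r (Metric.closedBall x R ∩ S) : ℝ) ≤ C * (R / r) ^ α}

/-- Upper θ-intermediate dimension (with the convention that `θ = 0` gives Hausdorff dimension).
Covers are finite, which is no loss of generality since all covering sets have diameter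
bounded below by `δ^(1/θ) > 0`. -/
def upperIntDim (n : ℕ) (θ : ℝ) (S : Set (EuclideanSpace ℝ (Fin n))) : ℝ :=
  if θ = 0 then (dimH S).toReal else
  sInf {s : ℝ | 0 ≤ s ∧ ∀ ε : ℝ, 0 < ε → ∃ δ₀ : ℝ, 0 < δ₀ ∧ δ₀ ≤ 1 ∧
    ∀ δ : ℝ, 0 < δ → δ < δ₀ →
    ∃ (m : ℕ) (U : Fin m → Set (EuclideanSpace ℝ (Fin n))),
      S ⊆ (⋃ i, U i) ∧ (∀ i, δ ^ (1/θ) ≤ Metric.diam (U i) ∧ Metric.diam (U i) ≤ δ) ∧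
      (∑ i, Metric.diam (U i) ^ s) ≤ ε}

/-- Lower θ-intermediate dimension (with the convention that `θ = 0` gives Hausdorff dimension). -/
def lowerIntDim (n : ℕ) (θ : ℝ) (S : Set (EuclideanSpace ℝ (Fin n))) : ℝ :=
  if θ = 0 then (dimH S).toReal else
  sInf {s : ℝ | 0 ≤ s ∧ ∀ ε : ℝ, 0 < ε → ∀ δ₀ : ℝ, 0 < δ₀ → δ₀ ≤ 1 →
    ∃ δ : ℝ, 0 < δ ∧ δ < δ₀ ∧
    ∃ (m : ℕ) (U : Fin m → Set (EuclideanSpace ℝ (Fin n))),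
      S ⊆ (⋃ i, U i) ∧ (∀ i, δ ^ (1/θ) ≤ Metric.diam (U i) ∧ Metric.diam (U i) ≤ δ) ∧
      (∑ i, Metric.diam (U i) ^ s) ≤ ε}

/-- `l_t(k,δ) = ⌊(1/(kδ))^(1/t)⌋`. -/
def lfun (t δ : ℝ) (k : ℕ) : ℕ := Nat.floor ((1/((k:ℝ)*δ)) ^ (1/t))

/-- The Duffin–Schaeffer sets `E^{(d-1)}(δ,n) ⊆ ℝ^{d-1}`. -/
def Eset (d : ℕ) (δ : ℝ) (n : ℕ) : Set (EuclideanSpace ℝ (Fin (d-1))) :=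
  {z | ∃ m : Fin (d-1) → ℕ, (∀ i, 1 ≤ m i ∧ m i < n ∧ Nat.Coprime (m i) n) ∧
    ∀ i, z i ∈ Set.Ioo ((m i : ℝ)/(n:ℝ) - δ) ((m i : ℝ)/(n:ℝ) + δ)}

/-- The horizontal-layer input sets `L_{t,d}(δ,k) ⊆ [0,1]^{d-1}`. -/
def Lset (t : ℝ) (d : ℕ) (δ : ℝ) (k : ℕ) : Set (EuclideanSpace ℝ (Fin (d-1))) :=
  {z | ∃ n : ℕ, lfun t δ (k+1) < n ∧ n ≤ lfun t δ k ∧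
    ∃ m : Fin (d-1) → ℕ, (∀ i, 1 ≤ m i ∧ m i < n ∧ Nat.Coprime (m i) n) ∧
    ∀ i, z i = (m i : ℝ)/(n:ℝ)}

end

/-! ### Counting close pairs of rational points -/

theorem card_int_near {m : ℕ} {x : ℝ} (hm : m = ⌊x⌋₊) {z : ℤ} (h : |(z:ℝ)| ≤ x) :
    z ∈ Finset.Icc (-(m:ℤ)) m := by
  have : ((z.natAbs : ℕ) : ℝ) ≤ x := by rwa [Nat.cast_natAbs, Int.cast_abs]
  have := Nat.le_floor this
  rw [Finset.mem_Icc]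
  omega

/-- For distinct primes `q, q'` the integer `p q' - p' q` is nonzero and determines `(p, p')` as long
as `p, p'` lie in `[1, L]` with `L < q`, so close pairs `p/q, p'/q'` are counted by the nonzero
integers of size at most `r P²`. Excluding `0` matters: it removes the `+1` from the count. -/
theorem card_close_offdiag {L q q' : ℕ} {P r : ℝ} (hq : q.Prime) (hq' : q'.Prime) (hne : q ≠ q')
    (hLq : L < q) (hqP : (q : ℝ) ≤ P) (hqP' : (q' : ℝ) ≤ P) (hr : 0 ≤ r) :
    (((Finset.Icc 1 L ×ˢ Finset.Icc 1 L).filter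
      (fun w : ℕ × ℕ => |(w.1 : ℝ) / q - (w.2 : ℝ) / q'| ≤ r)).card : ℝ) ≤ 2 * (r * P ^ 2) := by
  have hq0 : (0:ℝ) < q := by exact_mod_cast hq.pos
  have hq0' : (0:ℝ) < q' := by exact_mod_cast hq'.pos
  have hP : 0 ≤ r * P ^ 2 := by positivity
  have hcop : IsCoprime (q : ℤ) (q' : ℤ) :=
    Nat.isCoprime_iff_coprime.2 ((Nat.coprime_primes hq hq').2 hne)
  obtain ⟨m, hm⟩ : ∃ m, m = ⌊r * P ^ 2⌋₊ := ⟨_, rfl⟩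
  have hcard : ((Finset.Icc 1 L ×ˢ Finset.Icc 1 L).filter
      (fun w : ℕ × ℕ => |(w.1 : ℝ) / q - (w.2 : ℝ) / q'| ≤ r)).card ≤
      ((Finset.Icc (-(m:ℤ)) m).erase 0).card := by
    apply Finset.card_le_card_of_injOn (fun w => (w.1 : ℤ) * q' - (w.2 : ℤ) * q)
    · intro w hw
      simp only [Finset.coe_filter, Finset.mem_product, Finset.mem_Icc, Set.mem_ofPred_eq] at hw
      obtain ⟨⟨⟨h1, h2⟩, h3, h4⟩, h5⟩ := hw
      simp only [Finset.coe_erase, Set.mem_sdiff, Finset.mem_coe, Finset.mem_Icc,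
        Set.mem_singleton_iff]
      refine ⟨?_, ?_⟩
      · have h6 : |(w.1 : ℝ) * q' - w.2 * q| ≤ r * P ^ 2 := by
          have : (w.1 : ℝ) * q' - w.2 * q = ((w.1 : ℝ) / q - (w.2 : ℝ) / q') * (q * q') := by
            field_simp
          rw [this, abs_mul, abs_of_pos (mul_pos hq0 hq0')]
          have : (q:ℝ) * q' ≤ P ^ 2 := by nlinarith
          gcongr
        have h7 := card_int_near hm (z := (w.1 : ℤ) * q' - (w.2 : ℤ) * q) (by push_cast; exact h6)
        exact Finset.mem_Icc.1 h7
      · intro h0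
        have h10 : (q : ℤ) ∣ w.1 := by
          exact hcop.dvd_of_dvd_mul_right ⟨w.2, by linarith⟩
        have h11 := Nat.le_of_dvd h1 (Int.natCast_dvd_natCast.1 h10)
        omega
    · intro w hw v hv hwv
      simp only [Finset.coe_filter, Finset.mem_product, Finset.mem_Icc, Set.mem_ofPred_eq] at hw hv
      simp only at hwv
      have e1 : ((w.1:ℤ) - v.1) * q' = ((w.2:ℤ) - v.2) * q := by linarith
      have d1 : (q:ℤ) ∣ (w.1:ℤ) - v.1 :=
        hcop.dvd_of_dvd_mul_right ⟨(w.2:ℤ) - v.2, by linarith⟩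
      have z1 : (w.1:ℤ) - v.1 = 0 := by
        apply Int.eq_zero_of_abs_lt_dvd d1
        rw [abs_lt]; omega
      have z2 : (w.2:ℤ) - v.2 = 0 := by
        rw [z1, zero_mul] at e1
        rcases mul_eq_zero.1 e1.symm with h | h
        · exact h
        · have := hq.pos; omega
      ext <;> omega
  have hc2 : ((Finset.Icc (-(m:ℤ)) m).erase 0).card = 2 * m := by
    rw [Finset.card_erase_of_mem (by simp), Int.card_Icc]; omega
  rw [hc2] at hcard
  have : (m:ℝ) ≤ r * P ^ 2 := hm ▸ Nat.floor_le hP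
  calc _ ≤ ((2 * m : ℕ) : ℝ) := by exact_mod_cast hcard
    _ ≤ _ := by push_cast; linarith

theorem card_close_diag {L q : ℕ} {P r : ℝ} (hq : 0 < q) (hqP : (q : ℝ) ≤ P) (hr : 0 ≤ r) :
    (((Finset.Icc 1 L ×ˢ Finset.Icc 1 L).filter
      (fun w : ℕ × ℕ => |(w.1 : ℝ) / q - (w.2 : ℝ) / q| ≤ r)).card : ℝ)
      ≤ L * (2 * (r * P) + 1) := by
  have hq0 : (0:ℝ) < q := by exact_mod_cast hq
  have hP : 0 ≤ r * P := mul_nonneg hr (hq0.le.trans hqP)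
  obtain ⟨m, hm⟩ : ∃ m, m = ⌊r * P⌋₊ := ⟨_, rfl⟩
  have hcard : ((Finset.Icc 1 L ×ˢ Finset.Icc 1 L).filter
      (fun w : ℕ × ℕ => |(w.1 : ℝ) / q - (w.2 : ℝ) / q| ≤ r)).card ≤
      (Finset.Icc 1 L ×ˢ Finset.Icc (-(m:ℤ)) m).card := by
    apply Finset.card_le_card_of_injOn (fun w => (w.1, (w.1 : ℤ) - (w.2 : ℤ)))
    · intro w hw
      simp only [Finset.coe_filter, Finset.mem_product, Set.mem_ofPred_eq] at hw
      simp only [Finset.mem_coe, Finset.mem_product]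
      refine ⟨hw.1.1, card_int_near hm ?_⟩
      have : (w.1 : ℝ) - w.2 = ((w.1 : ℝ) / q - (w.2 : ℝ) / q) * q := by
        field_simp
      push_cast
      rw [this, abs_mul, abs_of_pos hq0]
      exact mul_le_mul hw.2 hqP hq0.le hr
    · intro w hw v hv hwv
      simp only [Prod.mk.injEq] at hwv
      ext <;> omega
  rw [Finset.card_product, Int.card_Icc, Nat.card_Icc] at hcard
  have : (m:ℝ) ≤ r * P := hm ▸ Nat.floor_le hP
  calc _ ≤ ((L * (2 * m + 1) : ℕ) : ℝ) := by
        norm_cast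
        refine hcard.trans (le_of_eq ?_)
        congr 1; omega
    _ ≤ _ := by push_cast; gcongr

theorem height_gap {s P x y : ℝ} (hs : 0 < s) (hx : 0 < x) (hxy : x ≤ y) (hyP : y ≤ P) :
    s * P ^ (-s-1) * (y - x) ≤ x ^ (-s) - y ^ (-s) := by
  rcases hxy.eq_or_lt with rfl | hlt
  · simp
  obtain ⟨c, hc, hc'⟩ := exists_deriv_eq_slope (fun z : ℝ => z ^ (-s)) hlt
    (fun z hz => (Real.continuousAt_rpow_const _ _
      (Or.inl (hx.trans_le hz.1).ne')).continuousWithinAt)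
    (fun z hz => (Real.differentiableAt_rpow_const_of_ne _
      (hx.trans hz.1).ne').differentiableWithinAt)
  have hc0 : 0 < c := hx.trans hc.1
  rw [Real.deriv_rpow_const, eq_div_iff (by linarith)] at hc'
  have : P ^ (-s-1) ≤ c ^ (-s-1) :=
    Real.rpow_le_rpow_of_nonpos hc0 (hc.2.le.trans hyP) (by linarith)
  have h2 : s * P ^ (-s-1) * (y - x) ≤ s * c ^ (-s-1) * (y - x) := by
    have : 0 ≤ y - x := by linarith
    gcongr
  linarith

theorem card_height_close {T : Finset ℕ} {s P r : ℝ} (hs : 0 < s) (hr : 0 ≤ r)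
    (hT : ∀ q ∈ T, 0 < q ∧ (q:ℝ) ≤ P) {q : ℕ} (hq : q ∈ T) :
    ((T.filter (fun q' : ℕ => |(q:ℝ) ^ (-s) - (q':ℝ) ^ (-s)| ≤ r)).card : ℝ)
      ≤ 2 * (r * P ^ (s + 1) / s) + 1 := by
  have hP : 0 < P := lt_of_lt_of_le (by exact_mod_cast (hT q hq).1) (hT q hq).2
  have hx : 0 ≤ r * P ^ (s + 1) / s := by positivity
  obtain ⟨m, hm⟩ : ∃ m, m = ⌊r * P ^ (s + 1) / s⌋₊ := ⟨_, rfl⟩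
  have hcard : (T.filter (fun q' : ℕ => |(q:ℝ) ^ (-s) - (q':ℝ) ^ (-s)| ≤ r)).card ≤
      (Finset.Icc (-(m:ℤ)) m).card := by
    apply Finset.card_le_card_of_injOn (fun q' : ℕ => (q : ℤ) - (q' : ℤ))
    · intro q' hq'
      simp only [Finset.coe_filter, Set.mem_ofPred_eq] at hq'
      refine card_int_near hm ?_
      push_cast
      have hpos : 0 < s * P ^ (-s-1) := by positivity
      have key : s * P ^ (-s-1) * |(q:ℝ) - q'| ≤ r := by
        refine le_trans ?_ hq'.2
        have a1 : (0:ℝ) < q := by exact_mod_cast (hT q hq).1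
        have a2 : (0:ℝ) < q' := by exact_mod_cast (hT q' hq'.1).1
        rcases le_total (q:ℝ) q' with h | h
        · rw [abs_sub_comm, abs_of_nonneg (by linarith)]
          exact (height_gap hs a1 h (hT q' hq'.1).2).trans (le_abs_self _)
        · rw [abs_of_nonneg (by linarith), abs_sub_comm]
          exact (height_gap hs a2 h (hT q hq).2).trans (le_abs_self _)
      rw [show -s - 1 = -(s+1) by ring, Real.rpow_neg hP.le] at key
      rw [le_div_iff₀ hs]
      have hp : 0 < P ^ (s+1) := by positivity
      have := mul_le_mul_of_nonneg_left key hp.le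
      calc _ = P ^ (s+1) * (s * (P ^ (s+1))⁻¹ * |(q:ℝ) - q'|) := by field_simp
        _ ≤ _ := by linarith
    · intro w hw v hv hwv
      simp only at hwv
      omega
  rw [Int.card_Icc] at hcard
  have : (m:ℝ) ≤ r * P ^ (s + 1) / s := hm ▸ Nat.floor_le hx
  calc _ ≤ ((2 * m + 1 : ℕ) : ℝ) := by
        norm_cast
        refine hcard.trans (le_of_eq ?_)
        omega
    _ ≤ _ := by push_cast; gcongr

/-- Cauchy–Schwarz over the fibres of `g`. -/
theorem sq_card_le {ι κ : Type*} [DecidableEq κ] (A : Finset ι) (K : Finset κ) (g : ι → κ)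
    (hg : ∀ a ∈ A, g a ∈ K) :
    A.card ^ 2 ≤ K.card * ((A ×ˢ A).filter (fun z => g z.1 = g z.2)).card := by
  have h1 : A.card = ∑ k ∈ K, (A.filter (fun a => g a = k)).card :=
    Finset.card_eq_sum_card_fiberwise hg
  have h2 : ((A ×ˢ A).filter (fun z => g z.1 = g z.2)).card
      = ∑ k ∈ K, (A.filter (fun a => g a = k)).card ^ 2 := by
    rw [Finset.card_eq_sum_card_fiberwise (f := fun z : ι × ι => g z.1) (t := K)]
    · refine Finset.sum_congr rfl fun k _ => ?_
      rw [sq, ← Finset.card_product]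
      congr 1
      ext ⟨a, b⟩
      simp only [Finset.mem_filter, Finset.mem_product]
      grind
    · intro z hz
      simp only [Finset.coe_filter, Finset.mem_product, Set.mem_ofPred_eq] at hz
      exact hg _ hz.1.1
  rw [h2, h1]
  exact sq_sum_le_card_mul_sum_sq

/-- Indices `(q, p)` of the rational points `p/q` with `q ∈ T` and all numerators in `[1, L]`.
It is used with `T` a set of primes exceeding `L`, which makes all these fractions reduced. -/
def gridIdx (n L : ℕ) (T : Finset ℕ) : Finset (ℕ × (Fin n → ℕ)) :=
  T ×ˢ Fintype.piFinset (fun _ => Finset.Icc 1 L)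

/-- The points `(p/q, q^{-s})` indexed by `a = (q, p)` and `b` differ by at most `r` in every
coordinate. -/
def Close {n : ℕ} (s r : ℝ) (a b : ℕ × (Fin n → ℕ)) : Prop :=
  |(a.1:ℝ) ^ (-s) - (b.1:ℝ) ^ (-s)| ≤ r ∧ ∀ i, |(a.2 i : ℝ) / a.1 - (b.2 i : ℝ) / b.1| ≤ r

open Classical in
/-- Second moment bound: the number of ordered pairs of indexed points of `G_{s,n+1}` that are
`r`-close. The first term comes from pairs with equal denominators, the second from pairs with
distinct ones, of which only `O(r P^{s+1}) + 1` are close in height to a given one. -/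
theorem card_close_pairs {n L : ℕ} {T : Finset ℕ} {s P r : ℝ} (hs : 0 < s) (hr : 0 ≤ r)
    (hP : 0 ≤ P) (hT : ∀ q ∈ T, q.Prime ∧ L < q ∧ (q:ℝ) ≤ P) :
    (((gridIdx n L T ×ˢ gridIdx n L T).filter (fun z => Close s r z.1 z.2)).card : ℝ) ≤
      P * (L * (2 * (r * P) + 1)) ^ n
        + P * ((2 * (r * P ^ (s + 1) / s) + 1) * (2 * (r * P ^ 2)) ^ n) := by
  set W : ℕ → ℕ → Finset (ℕ × ℕ) := fun q q' => (Finset.Icc 1 L ×ˢ Finset.Icc 1 L).filter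
      (fun w : ℕ × ℕ => |(w.1 : ℝ) / q - (w.2 : ℝ) / q'| ≤ r) with hW
  have hTP : (T.card : ℝ) ≤ P := by
    have : T.card ≤ (Finset.Icc 1 ⌊P⌋₊).card := by
      apply Finset.card_le_card
      intro q hq
      obtain ⟨h1, h2, h3⟩ := hT q hq
      exact Finset.mem_Icc.2 ⟨h1.one_le, Nat.le_floor h3⟩
    rw [Nat.card_Icc, Nat.add_sub_cancel] at this
    exact (Nat.cast_le.2 this).trans (Nat.floor_le hP)
  rw [Finset.card_eq_sum_card_fiberwise (f := fun z => (z.1.1, z.2.1)) (t := T ×ˢ T)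
    (fun z hz => by
      simp only [gridIdx, Finset.coe_filter, Finset.mem_product, Set.mem_ofPred_eq] at hz
      simp only [Finset.mem_coe, Finset.mem_product]
      exact ⟨hz.1.1.1, hz.1.2.1⟩), Finset.sum_product]
  push_cast
  have hfib : ∀ q q' : ℕ, ((((gridIdx n L T ×ˢ gridIdx n L T).filter
      (fun z => Close s r z.1 z.2)).filter (fun z => (z.1.1, z.2.1) = (q, q'))).card : ℝ) ≤
      if |(q:ℝ) ^ (-s) - (q':ℝ) ^ (-s)| ≤ r then ((W q q').card : ℝ) ^ n else 0 := by
    intro q q'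
    split_ifs with h
    · have : (((gridIdx n L T ×ˢ gridIdx n L T).filter
          (fun z => Close s r z.1 z.2)).filter (fun z => (z.1.1, z.2.1) = (q, q'))).card ≤
          (Fintype.piFinset (fun _ : Fin n => W q q')).card := by
        apply Finset.card_le_card_of_injOn
          (fun z : (ℕ × (Fin n → ℕ)) × (ℕ × (Fin n → ℕ)) => fun i => (z.1.2 i, z.2.2 i))
        · rintro ⟨⟨a, p⟩, ⟨b, p'⟩⟩ hz
          obtain ⟨hz1, hz2⟩ := Finset.mem_filter.1 (Finset.mem_coe.1 hz)
          obtain ⟨hz3, h3⟩ := Finset.mem_filter.1 hz1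
          simp only [gridIdx, Finset.mem_product, Fintype.mem_piFinset] at hz3
          obtain ⟨⟨-, h1⟩, -, h2⟩ := hz3
          obtain ⟨rfl, rfl⟩ := Prod.mk.inj hz2
          simp only [Finset.mem_coe, Fintype.mem_piFinset, hW, Finset.mem_filter,
            Finset.mem_product]
          exact fun i => ⟨⟨h1 i, h2 i⟩, h3.2 i⟩
        · rintro ⟨⟨a, p⟩, ⟨b, p'⟩⟩ hz ⟨⟨a2, p2⟩, ⟨b2, p2'⟩⟩ hz2 he
          obtain ⟨rfl, rfl⟩ := Prod.mk.inj (Finset.mem_filter.1 (Finset.mem_coe.1 hz)).2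
          obtain ⟨rfl, rfl⟩ := Prod.mk.inj (Finset.mem_filter.1 (Finset.mem_coe.1 hz2)).2
          have h1 : p = p2 := funext fun i => congrArg Prod.fst (congrFun he i)
          have h2 : p' = p2' := funext fun i => congrArg Prod.snd (congrFun he i)
          rw [h1, h2]
      rw [Fintype.card_piFinset_const] at this
      exact_mod_cast this
    · rw [Finset.card_eq_zero.2, Nat.cast_zero]
      rw [Finset.eq_empty_iff_forall_notMem]
      rintro ⟨⟨a, p⟩, ⟨b, p'⟩⟩ hz
      obtain ⟨hz1, hz2⟩ := Finset.mem_filter.1 hz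
      obtain ⟨rfl, rfl⟩ := Prod.mk.inj hz2
      exact h (Finset.mem_filter.1 hz1).2.1
  set X : ℝ := (L * (2 * (r * P) + 1)) ^ n with hX
  set Y : ℝ := (2 * (r * P ^ 2)) ^ n with hY
  have hX0 : 0 ≤ X := by positivity
  have hY0 : 0 ≤ Y := by positivity
  have hrow : ∀ q ∈ T, (∑ q' ∈ T, ((((gridIdx n L T ×ˢ gridIdx n L T).filter
      (fun z => Close s r z.1 z.2)).filter (fun z => (z.1.1, z.2.1) = (q, q'))).card : ℝ)) ≤
      X + (2 * (r * P ^ (s + 1) / s) + 1) * Y := by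
    intro q hq
    have hqT := hT q hq
    calc _ ≤ ∑ q' ∈ T, ((if q = q' then X else 0) +
          (if |(q:ℝ) ^ (-s) - (q':ℝ) ^ (-s)| ≤ r then Y else 0)) := by
          refine Finset.sum_le_sum fun q' hq' => (hfib q q').trans ?_
          have hqT' := hT q' hq'
          by_cases hqq : q = q'
          · subst hqq
            have hd : ((W q q).card : ℝ) ^ n ≤ X :=
              pow_le_pow_left₀ (Nat.cast_nonneg _)
                (card_close_diag (L := L) hqT.1.pos hqT.2.2 hr) n
            simp only [sub_self, abs_zero, hr, if_true]
            linarith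
          · rw [if_neg hqq, zero_add]
            split_ifs
            · exact pow_le_pow_left₀ (Nat.cast_nonneg _)
                (card_close_offdiag hqT.1 hqT'.1 hqq hqT.2.1 hqT.2.2 hqT'.2.2 hr) n
            · exact le_rfl
      _ ≤ _ := by
          rw [Finset.sum_add_distrib, Finset.sum_ite_eq, if_pos hq, ← Finset.sum_filter,
            Finset.sum_const, nsmul_eq_mul]
          gcongr
          exact card_height_close hs hr (fun q h => ⟨(hT q h).1.pos, (hT q h).2.2⟩) hq
  calc _ ≤ ∑ q ∈ T, (X + (2 * (r * P ^ (s + 1) / s) + 1) * Y) := Finset.sum_le_sum hrow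
    _ = T.card * (X + (2 * (r * P ^ (s + 1) / s) + 1) * Y) := by
        rw [Finset.sum_const, nsmul_eq_mul]
    _ ≤ P * (X + (2 * (r * P ^ (s + 1) / s) + 1) * Y) := by gcongr
    _ = _ := by ring

/-! ### The sets `G` and `F` -/

/-- The point `(p₁/q, …, pₙ/q, q^{-t})` of `ℝ^{n+1}`, where `a = (q, p)`. -/
noncomputable def spike (t : ℝ) {n : ℕ} (a : ℕ × (Fin n → ℕ)) : EuclideanSpace ℝ (Fin (n + 1)) :=
  WithLp.toLp 2 (Fin.snoc (fun i => (a.2 i : ℝ) / a.1) ((a.1 : ℝ) ^ (-t)))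

@[simp] theorem spike_castSucc (t : ℝ) {n : ℕ} (a : ℕ × (Fin n → ℕ)) (i : Fin n) :
    spike t a i.castSucc = (a.2 i : ℝ) / a.1 := by
  simp [spike]

@[simp] theorem spike_last (t : ℝ) {n : ℕ} (a : ℕ × (Fin n → ℕ)) :
    spike t a (Fin.last n) = (a.1 : ℝ) ^ (-t) := by
  simp [spike]

theorem reduced_denom_unique {a b q q' : ℕ} (hq : 0 < q) (hq' : 0 < q')
    (h : Nat.Coprime a q) (h' : Nat.Coprime b q') (he : (a : ℝ) / q = (b : ℝ) / q') : q = q' := by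
  rw [div_eq_div_iff (by positivity) (by positivity)] at he
  have he' : a * q' = b * q := by exact_mod_cast he
  apply Nat.dvd_antisymm
  · exact h.symm.dvd_of_dvd_mul_left ⟨b, by linarith⟩
  · exact h'.symm.dvd_of_dvd_mul_left ⟨a, by linarith⟩

/-- A coordinate `p i / q` in lowest terms determines `q`, so the denominator chosen in the definition
of `popcornFun` is the given one. This needs at least one coordinate, whence `0 < n`. -/
theorem popcornFun_eq {n : ℕ} (hn : 0 < n) (t : ℝ) (x : Fin n → ℝ) (q : ℕ) (p : Fin n → ℕ)
    (h : ∀ i, 1 ≤ p i ∧ p i < q ∧ Nat.Coprime (p i) q) (hx : ∀ i, x i = (p i : ℝ) / q) :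
    popcornFun t (n + 1) x = (q : ℝ) ^ (-t) := by
  have hex : ∃ q : ℕ, ∃ p : Fin (n + 1 - 1) → ℕ,
      (∀ i, 1 ≤ p i ∧ p i < q ∧ Nat.Coprime (p i) q) ∧ (∀ i, x i = (p i : ℝ) / (q : ℝ)) :=
    ⟨q, p, h, hx⟩
  have hval : popcornFun t (n + 1) x = (hex.choose : ℝ) ^ (-t) := dif_pos hex
  rw [hval]
  obtain ⟨p', h', hx'⟩ := hex.choose_spec
  have i : Fin n := ⟨0, hn⟩
  have h1 := h i
  have h2 := h' i
  have : hex.choose = q := reduced_denom_unique (by omega) (by omega) h2.2.2 h1.2.2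
    (by rw [← hx i, ← hx' i])
  rw [this]

theorem spike_mem_Gset {n : ℕ} (hn : 0 < n) (t : ℝ) (q : ℕ) (p : Fin n → ℕ)
    (h : ∀ i, 1 ≤ p i ∧ p i < q ∧ Nat.Coprime (p i) q) : spike t (q, p) ∈ Gset t (n + 1) := by
  refine ⟨fun i => (p i : ℝ) / q, fun i => ⟨by positivity, ?_⟩, fun i => ?_, fun j hj => ?_⟩
  · have := (h i).2.1
    exact div_le_one_of_le₀ (by exact_mod_cast this.le) (by positivity)
  · exact spike_castSucc t (q, p) i
  · obtain rfl : j = Fin.last n := Fin.ext (by simpa using hj)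
    rw [spike_last]
    exact (popcornFun_eq hn t _ q p h (fun i => rfl)).symm

theorem Gset_subset_Fset {n : ℕ} (t : ℝ) : Gset t (n + 1) ⊆ Fset t (n + 1) := by
  rintro z ⟨x, hx, hz, hl⟩
  by_cases hex : ∃ q : ℕ, ∃ p : Fin (n + 1 - 1) → ℕ,
      (∀ i, 1 ≤ p i ∧ p i < q ∧ Nat.Coprime (p i) q) ∧ (∀ i, x i = (p i : ℝ) / (q : ℝ))
  · left
    obtain ⟨p, h1, h2⟩ := hex.choose_spec
    refine ⟨hex.choose, p, fun i => ⟨(h1 i).1, (h1 i).2.1⟩, fun i => by rw [hz i, h2 i],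
      fun j hj => ?_⟩
    rw [hl j hj, popcornFun, dif_pos hex]
  · right
    refine ⟨fun i => by rw [hz i]; exact hx i, fun j hj => ?_⟩
    rw [hl j hj, popcornFun, dif_neg hex]

/-- Cover of `F_{t,n+1}` at parameter `Q`: a point is either one of the at most `Q^{n+1}` spikes with
denominator at most `Q`, or lies in the slab of height `Q^{-t}` over the unit cube. -/
theorem Fset_split {n : ℕ} (hn : 0 < n) {t : ℝ} (ht : 0 < t) {Q : ℕ} (hQ : 0 < Q)
    {z : EuclideanSpace ℝ (Fin (n + 1))} (hz : z ∈ Fset t (n + 1)) :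
    (∃ a ∈ Finset.Icc 1 Q ×ˢ Fintype.piFinset (fun _ : Fin n => Finset.range Q), z = spike t a) ∨
    ((∀ i : Fin n, z i.castSucc ∈ Set.Icc (0:ℝ) 1) ∧
      z (Fin.last n) ∈ Set.Icc (0:ℝ) ((Q:ℝ) ^ (-t))) := by
  rcases hz with ⟨q, p, h, hz, hl⟩ | ⟨hz, hl⟩
  · have hz' : ∀ i : Fin n, z i.castSucc = (p i : ℝ) / q := hz
    have hl' := hl (Fin.last n) (by simp)
    have hq : 1 ≤ q := by have := h ⟨0, hn⟩; omega
    by_cases hqQ : q ≤ Q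
    · left
      refine ⟨(q, p), ?_, ?_⟩
      · simp only [Finset.mem_product, Finset.mem_Icc, Fintype.mem_piFinset, Finset.mem_range]
        exact ⟨⟨hq, hqQ⟩, fun i => (h i).2.trans_le hqQ⟩
      · ext j
        refine Fin.lastCases ?_ (fun i => ?_) j
        · rw [spike_last, hl']
        · rw [spike_castSucc, hz']
    · right
      refine ⟨fun i => ?_, ?_⟩
      · rw [hz']
        exact ⟨by positivity, div_le_one_of_le₀ (by exact_mod_cast (h i).2.le) (by positivity)⟩
      · rw [hl']
        refine ⟨by positivity, Real.rpow_le_rpow_of_nonpos (by exact_mod_cast hQ) ?_ (by linarith)⟩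
        exact_mod_cast (not_le.1 hqQ).le
  · right
    refine ⟨hz, ?_⟩
    rw [hl (Fin.last n) (by simp)]
    exact ⟨le_rfl, by positivity⟩

theorem spike_injOn {n : ℕ} {t : ℝ} (ht : 0 < t) :
    Set.InjOn (spike t (n := n)) {a | 0 < a.1} := by
  rintro ⟨q, p⟩ hq ⟨q', p'⟩ hq' h
  have hq0 : 0 < q := hq
  have hq0' : 0 < q' := hq'
  have h1 := congrArg (fun z : EuclideanSpace ℝ (Fin (n + 1)) => z (Fin.last n)) h
  simp only [spike_last] at h1
  have h2 : (q:ℝ) = q' :=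
    (Real.rpow_left_inj (by positivity) (by positivity) (by linarith)).1 h1
  obtain rfl : q = q' := by exact_mod_cast h2
  have h3 : p = p' := by
    funext i
    have h4 := congrArg (fun z : EuclideanSpace ℝ (Fin (n + 1)) => z i.castSucc) h
    simp only [spike_castSucc] at h4
    have hq1 : (q:ℝ) ≠ 0 := by positivity
    exact_mod_cast (div_left_inj' hq1).1 h4
  rw [h3]

theorem norm_le_of_coord {n : ℕ} {z : EuclideanSpace ℝ (Fin n)} {ε : ℝ} (hε : 0 ≤ ε)
    (h : ∀ i, |z i| ≤ ε) : ‖z‖ ≤ n * ε := by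
  rw [EuclideanSpace.norm_eq]
  apply Real.sqrt_le_iff.2
  refine ⟨by positivity, ?_⟩
  calc _ ≤ ∑ i : Fin n, ε ^ 2 := by
        gcongr with i
        exact h i
    _ = n * ε ^ 2 := by simp
    _ ≤ _ := by
        rw [mul_pow]
        gcongr
        exact_mod_cast Nat.le_self_pow two_ne_zero n

theorem floor_eq_close {x y N : ℝ} (hN : 0 < N) (hx : 0 ≤ x) (hy : 0 ≤ y)
    (h : ⌊x * N⌋₊ = ⌊y * N⌋₊) : |x - y| ≤ N⁻¹ := by
  have a1 := Nat.floor_le (mul_nonneg hx hN.le)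
  have a2 := Nat.floor_le (mul_nonneg hy hN.le)
  have a3 := Nat.lt_floor_add_one (x * N)
  have a4 := Nat.lt_floor_add_one (y * N)
  rw [h] at a1 a3
  have h0 : |x - y| * N = |x * N - y * N| := by
    rw [← sub_mul, abs_mul, abs_of_pos hN]
  rw [← one_div, le_div_iff₀ hN, h0, abs_le]
  constructor <;> linarith

/-- The finite inequality behind the theorem. Preimages of the indexed points of `G_{s,n+1}` are either
spikes with denominator at most `Q`, at most `Q^{n+1}` in number, or lie in one of `(3Q^t)^n` boxes of
side `Q^{-t}`. By `hbig` at least half of them are of the second kind; two points whose preimages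
share a box are `r`-close by the Hölder condition, so `sq_card_le` and `card_close_pairs` apply. -/
theorem counting {n : ℕ} (hn : 0 < n) {s t : ℝ} (hs : 0 < s) (ht : 0 < t)
    {S₁ S₂ : Set (EuclideanSpace ℝ (Fin (n + 1)))}
    (hS₁ : Gset s (n + 1) ⊆ S₁) (hS₂ : S₂ ⊆ Fset t (n + 1)) {α : ℝ} (hα : 0 < α)
    {f : EuclideanSpace ℝ (Fin (n + 1)) → EuclideanSpace ℝ (Fin (n + 1))} {c : ℝ} (hc : 0 < c)
    (hf : ∀ x ∈ S₂, ∀ y ∈ S₂, ‖f x - f y‖ ≤ c * ‖x - y‖ ^ α) (hcov : S₁ ⊆ f '' S₂)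
    {Q L : ℕ} (hQ : 0 < Q) {P r : ℝ} (hP : 0 ≤ P) {T : Finset ℕ}
    (hT : ∀ q ∈ T, q.Prime ∧ L < q ∧ (q:ℝ) ≤ P)
    (hr : c * (((n + 1 : ℕ) : ℝ) * (Q:ℝ) ^ (-t)) ^ α ≤ r)
    (hbig : 2 * Q ^ (n + 1) ≤ T.card * L ^ n) :
    ((T.card * L ^ n : ℕ) : ℝ) ^ 2 ≤ 4 * ((3 * (Q:ℝ) ^ t) ^ n *
      (P * (L * (2 * (r * P) + 1)) ^ n
        + P * ((2 * (r * P ^ (s + 1) / s) + 1) * (2 * (r * P ^ 2)) ^ n))) := by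
  classical
  have hr0 : 0 ≤ r := le_trans (by positivity) hr
  set A := gridIdx n L T with hA
  have hAcard : A.card = T.card * L ^ n := by
    rw [hA, gridIdx, Finset.card_product, Fintype.card_piFinset_const, Nat.card_Icc,
      Nat.add_sub_cancel]
  have hApos : ∀ a ∈ A, 0 < a.1 := fun a ha =>
    (hT a.1 (Finset.mem_product.1 ha).1).1.pos
  have hpre : ∀ a ∈ A, ∃ y ∈ S₂, f y = spike s a := by
    rintro ⟨q, p⟩ ha
    obtain ⟨h1, h2⟩ := Finset.mem_product.1 ha
    obtain ⟨hq, hLq, -⟩ := hT q h1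
    refine hcov (hS₁ (spike_mem_Gset hn s q p fun i => ?_))
    have h3 := Finset.mem_Icc.1 (Fintype.mem_piFinset.1 h2 i)
    have h4 : p i < q := h3.2.trans_lt hLq
    exact ⟨h3.1, h4, ((hq.coprime_iff_not_dvd).2 (Nat.not_dvd_of_pos_of_lt h3.1 h4)).symm⟩
  choose! y hyS hfy using hpre
  set E := Finset.Icc 1 Q ×ˢ Fintype.piFinset (fun _ : Fin n => Finset.range Q) with hE
  set A₁ := A.filter (fun a => y a ∈ E.image (spike t)) with hA₁
  set A₂ := A.filter (fun a => ¬ y a ∈ E.image (spike t)) with hA₂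
  have hsum : A₁.card + A₂.card = A.card := Finset.card_filter_add_card_filter_not _
  have hyinj : Set.InjOn y A := by
    intro a ha b hb hab
    apply spike_injOn hs (hApos a ha) (hApos b hb)
    rw [← hfy a ha, ← hfy b hb, hab]
  have hc1 : A₁.card ≤ Q ^ (n + 1) := by
    calc A₁.card ≤ (E.image (spike t)).card :=
          Finset.card_le_card_of_injOn y (fun a ha => (Finset.mem_filter.1 ha).2)
            (hyinj.mono (Finset.coe_subset.2 (Finset.filter_subset _ _)))
      _ ≤ E.card := Finset.card_image_le
      _ = Q ^ (n + 1) := by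
          rw [hE, Finset.card_product, Fintype.card_piFinset_const, Nat.card_Icc,
            Nat.add_sub_cancel, Finset.card_range, pow_succ']
  have hlow : ∀ a ∈ A₂, (∀ i : Fin n, y a i.castSucc ∈ Set.Icc (0:ℝ) 1) ∧
      y a (Fin.last n) ∈ Set.Icc (0:ℝ) ((Q:ℝ) ^ (-t)) := by
    intro a ha
    obtain ⟨ha1, ha2⟩ := Finset.mem_filter.1 ha
    refine (Fset_split hn ht hQ (hS₂ (hyS a ha1))).resolve_left ?_
    rintro ⟨b, hb, hab⟩
    exact ha2 (Finset.mem_image.2 ⟨b, hb, hab.symm⟩)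
  have hQ1 : (1:ℝ) ≤ Q := by exact_mod_cast hQ
  have hQt : 1 ≤ (Q:ℝ) ^ t := Real.one_le_rpow hQ1 ht.le
  -- boxes of side `B⁻¹ ≤ Q^{-t}`; there are `(B + 1)^n` of them
  set B : ℕ := ⌈(Q:ℝ) ^ t⌉₊ with hB
  have hB1 : (Q:ℝ) ^ t ≤ B := Nat.le_ceil _
  have hB2 : (B:ℝ) < (Q:ℝ) ^ t + 1 := Nat.ceil_lt_add_one (by positivity)
  have hB0 : (0:ℝ) < B := by linarith
  set g : ℕ × (Fin n → ℕ) → Fin n → ℕ := fun a i => ⌊y a i.castSucc * B⌋₊ with hg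
  set K := Fintype.piFinset (fun _ : Fin n => Finset.range (B + 1)) with hK
  have hgK : ∀ a ∈ A₂, g a ∈ K := by
    intro a ha
    refine Fintype.mem_piFinset.2 fun i => Finset.mem_range.2 (Nat.lt_succ_of_le ?_)
    have := (hlow a ha).1 i
    refine Nat.floor_le_of_le ?_
    calc y a i.castSucc * B ≤ 1 * B := by gcongr; exact this.2
      _ = B := one_mul _
  have hclose : ((A₂ ×ˢ A₂).filter (fun z => g z.1 = g z.2)) ⊆
      (A ×ˢ A).filter (fun z => Close s r z.1 z.2) := by
    rintro ⟨a, b⟩ hz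
    obtain ⟨hz1, hz2⟩ := Finset.mem_filter.1 hz
    obtain ⟨ha, hb⟩ := Finset.mem_product.1 hz1
    simp only at ha hb hz2
    have haA := (Finset.mem_filter.1 ha).1
    have hbA := (Finset.mem_filter.1 hb).1
    refine Finset.mem_filter.2 ⟨Finset.mem_product.2 ⟨haA, hbA⟩, ?_⟩
    have hla := hlow a ha
    have hlb := hlow b hb
    have hy : ‖y a - y b‖ ≤ ((n + 1 : ℕ) : ℝ) * (Q:ℝ) ^ (-t) := by
      refine norm_le_of_coord (by positivity) fun j => ?_
      rw [PiLp.sub_apply]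
      refine Fin.lastCases ?_ (fun i => ?_) j
      · rw [abs_le]
        have h1 := hla.2
        have h2 := hlb.2
        constructor <;> linarith [h1.1, h1.2, h2.1, h2.2]
      · refine (floor_eq_close hB0 (hla.1 i).1 (hlb.1 i).1 (congrFun hz2 i)).trans ?_
        rw [Real.rpow_neg (by positivity)]
        gcongr
    have hfr : ‖spike s a - spike s b‖ ≤ r := by
      rw [← hfy a haA, ← hfy b hbA]
      refine (hf _ (hyS a haA) _ (hyS b hbA)).trans (le_trans ?_ hr)
      gcongr
    have hcoord : ∀ j, |spike s a j - spike s b j| ≤ r := fun j => by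
      have := (PiLp.norm_apply_le (spike s a - spike s b) j).trans hfr
      simpa using this
    refine ⟨by simpa using hcoord (Fin.last n), fun i => by simpa using hcoord i.castSucc⟩
  have hCS := sq_card_le A₂ K g hgK
  have hKcard : (K.card : ℝ) ≤ (3 * (Q:ℝ) ^ t) ^ n := by
    rw [hK, Fintype.card_piFinset_const, Finset.card_range]
    push_cast
    gcongr
    linarith
  have hpairs := card_close_pairs (n := n) hs hr0 hP hT
  have h2 : ((T.card * L ^ n : ℕ) : ℝ) ≤ 2 * A₂.card := by
    rw [← hAcard]
    have : A.card ≤ 2 * A₂.card := by omega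
    exact_mod_cast this
  have h3 : ((A₂.card : ℝ)) ^ 2 ≤
      K.card * (((A ×ˢ A).filter (fun z => Close s r z.1 z.2)).card : ℝ) := by
    exact_mod_cast hCS.trans (Nat.mul_le_mul_left _ (Finset.card_le_card hclose))
  calc ((T.card * L ^ n : ℕ) : ℝ) ^ 2 ≤ (2 * (A₂.card : ℝ)) ^ 2 := by gcongr
    _ = 4 * (A₂.card : ℝ) ^ 2 := by ring
    _ ≤ 4 * (K.card * (((A ×ˢ A).filter (fun z => Close s r z.1 z.2)).card : ℝ)) := by gcongr
    _ ≤ _ := by gcongr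

/-! ### Growth rates -/

/-- Consequence of Chebyshev's lower bound `π(x) ≫ x / log x`. -/
theorem eventually_rpow_le_primeCounting {κ : ℝ} (hκ : κ < 1) :
    ∀ᶠ x : ℝ in atTop, 2 * x ^ κ ≤ (Nat.primeCounting ⌊x⌋₊ : ℝ) := by
  have h1 := (isLittleO_log_rpow_atTop (r := 1 - κ) (by linarith)).bound
    (show (0:ℝ) < 1/8 by norm_num)
  have h2 := (isLittleO_log_rpow_atTop (r := 1) (by norm_num)).bound
    (show (0:ℝ) < 1/10 by norm_num)
  filter_upwards [h1, h2, eventually_ge_atTop 10] with x h1 h2 hx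
  have hlog : 0 < Real.log x := Real.log_pos (by linarith)
  rw [Real.norm_of_nonneg hlog.le, Real.norm_of_nonneg (by positivity)] at h1 h2
  rw [Real.rpow_one] at h2
  refine le_trans ?_ (Chebyshev.pi_ge' (x := x) (by linarith))
  rw [le_div_iff₀ hlog]
  have h3 : Real.log (x + 2) ≤ Real.log 2 + Real.log x := by
    rw [← Real.log_mul (by norm_num) (by positivity)]
    exact Real.log_le_log (by positivity) (by linarith)
  have h4 := Real.log_two_gt_d9
  have h5 := Real.log_two_lt_d9
  have h6 : x ^ κ * x ^ (1 - κ) = x := by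
    rw [← Real.rpow_add (by positivity)]; simp
  have h7 : 2 * x ^ κ * Real.log x ≤ 2 * x ^ κ * (1/8 * x ^ (1-κ)) := by gcongr
  have h8 : 2 * x ^ κ * (1/8 * x ^ (1-κ)) = x / 4 := by
    linear_combination (1/4) * h6
  nlinarith

theorem eventually_many_primes {a b : ℝ} (hb : 0 < b) (hab : b < a) :
    ∀ᶠ x : ℝ in atTop, ∃ T : Finset ℕ, (∀ q ∈ T, q.Prime ∧ ⌊x ^ b⌋₊ < q ∧ (q:ℝ) ≤ x ^ a) ∧
      x ^ b ≤ (T.card : ℝ) := by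
  have ha : 0 < a := hb.trans hab
  have h1 := (tendsto_rpow_atTop ha).eventually
    (eventually_rpow_le_primeCounting (κ := b / a) ((div_lt_one ha).2 hab))
  filter_upwards [h1, eventually_ge_atTop 1] with x h1 hx
  have hx0 : 0 ≤ x := by linarith
  refine ⟨(Finset.Ioc ⌊x ^ b⌋₊ ⌊x ^ a⌋₊).filter Nat.Prime, fun q hq => ?_, ?_⟩
  · obtain ⟨h2, h3⟩ := Finset.mem_filter.1 hq
    obtain ⟨h4, h5⟩ := Finset.mem_Ioc.1 h2
    exact ⟨h3, h4, (Nat.le_floor_iff (by positivity)).1 h5⟩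
  · rw [← Real.rpow_mul hx0, mul_div_cancel₀ _ ha.ne'] at h1
    have h2 : Nat.primeCounting ⌊x ^ a⌋₊ ≤
        ⌊x ^ b⌋₊ + ((Finset.Ioc ⌊x ^ b⌋₊ ⌊x ^ a⌋₊).filter Nat.Prime).card := by
      rw [← Nat.primesLE_card_eq_primeCounting]
      calc _ ≤ (Finset.Icc 1 ⌊x ^ b⌋₊ ∪
            (Finset.Ioc ⌊x ^ b⌋₊ ⌊x ^ a⌋₊).filter Nat.Prime).card := by
            apply Finset.card_le_card
            intro q hq
            have hq' := Nat.mem_primesLE.1 hq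
            simp only [Finset.mem_union, Finset.mem_Icc, Finset.mem_filter, Finset.mem_Ioc]
            have := hq'.2.pos
            by_cases h : q ≤ ⌊x ^ b⌋₊
            · left; omega
            · right; exact ⟨⟨by omega, hq'.1⟩, hq'.2⟩
        _ ≤ _ := by
            refine (Finset.card_union_le _ _).trans ?_
            rw [Nat.card_Icc, Nat.add_sub_cancel]
    have h3 : (⌊x ^ b⌋₊ : ℝ) ≤ x ^ b := Nat.floor_le (by positivity)
    have h4 : (Nat.primeCounting ⌊x ^ a⌋₊ : ℝ) ≤
        (⌊x ^ b⌋₊ : ℝ) + (((Finset.Ioc ⌊x ^ b⌋₊ ⌊x ^ a⌋₊).filter Nat.Prime).card : ℝ) := by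
      exact_mod_cast h2
    linarith

/-- The bound of `counting` for `P = u^a` and `r = C u^{-β}`, in terms of a single power of `u` that
dominates the three powers arising in the expansion. -/
theorem pair_bound_le {n L : ℕ} {s t a β C E u : ℝ} (hu : 1 ≤ u) (hC : 0 ≤ C) (hs : 0 < s)
    (hβ : β ≤ a * (s + 1)) (h1 : t * n + a * (n + 1) ≤ E)
    (h2 : t * n + a * (n + 1) + (a - β) * n ≤ E)
    (h3 : t * n + a + (a * (s + 1) - β) + (2 * a - β) * n ≤ E) (hL : (L : ℝ) ≤ u ^ a) :
    (3 * u ^ t) ^ n * (u ^ a * (L * (2 * ((C * u ^ (-β)) * u ^ a) + 1)) ^ n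
      + u ^ a * ((2 * ((C * u ^ (-β)) * (u ^ a) ^ (s + 1) / s) + 1)
          * (2 * ((C * u ^ (-β)) * (u ^ a) ^ 2)) ^ n)) ≤
      3 ^ n * (2 ^ n * (2 * C) ^ n + 2 ^ n + (2 * C / s + 1) * (2 * C) ^ n) * u ^ E := by
  have hu0 : 0 < u := by linarith
  have e1 : C * u ^ (-β) * u ^ a = C * u ^ (a - β) := by
    rw [mul_assoc, ← Real.rpow_add hu0]; ring_nf
  have e2 : C * u ^ (-β) * (u ^ a) ^ (s + 1) = C * u ^ (a * (s + 1) - β) := by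
    rw [mul_assoc, ← Real.rpow_mul hu0.le, ← Real.rpow_add hu0]; ring_nf
  have e3 : C * u ^ (-β) * (u ^ a) ^ 2 = C * u ^ (2 * a - β) := by
    rw [mul_assoc, ← Real.rpow_mul_natCast hu0.le, ← Real.rpow_add hu0]; push_cast; ring_nf
  have f1 : (L * (2 * (C * u ^ (a - β)) + 1)) ^ n ≤
      u ^ (a * n) * (2 ^ n * ((2 * C) ^ n * u ^ ((a - β) * n) + 1)) := by
    have g1 : (2 * (C * u ^ (a - β)) + 1) ^ n ≤
        2 ^ n * ((2 * C) ^ n * u ^ ((a - β) * n) + 1) := by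
      refine (add_pow_le (by positivity) zero_le_one n).trans ?_
      rw [one_pow, ← mul_assoc, mul_pow, ← Real.rpow_mul_natCast hu0.le]
      gcongr
      · norm_num
      · omega
    rw [mul_pow, Real.rpow_mul_natCast hu0.le]
    gcongr
  have f2 : 2 * (C * u ^ (a * (s + 1) - β) / s) + 1 ≤
      (2 * C / s + 1) * u ^ (a * (s + 1) - β) := by
    have : 1 ≤ u ^ (a * (s + 1) - β) := Real.one_le_rpow hu (by linarith)
    have e : 2 * (C * u ^ (a * (s + 1) - β) / s) = 2 * C / s * u ^ (a * (s + 1) - β) := by ring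
    rw [e]; linarith
  have f3 : (2 * (C * u ^ (2 * a - β))) ^ n = (2 * C) ^ n * u ^ ((2 * a - β) * n) := by
    rw [← mul_assoc, mul_pow, ← Real.rpow_mul_natCast hu0.le]
  rw [e1, e2, e3, f3, mul_pow 3, ← Real.rpow_mul_natCast hu0.le]
  have k1 : u ^ (t * n) * (u ^ a * u ^ (a * n)) ≤ u ^ E := by
    rw [← Real.rpow_add hu0, ← Real.rpow_add hu0]
    exact Real.rpow_le_rpow_of_exponent_le hu (by linarith)
  have k2 : u ^ (t * n) * (u ^ a * u ^ (a * n) * u ^ ((a - β) * n)) ≤ u ^ E := by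
    rw [← Real.rpow_add hu0, ← Real.rpow_add hu0, ← Real.rpow_add hu0]
    exact Real.rpow_le_rpow_of_exponent_le hu (by linarith)
  have k3 : u ^ (t * n) * (u ^ a * u ^ (a * (s + 1) - β) * u ^ ((2 * a - β) * n)) ≤ u ^ E := by
    rw [← Real.rpow_add hu0, ← Real.rpow_add hu0, ← Real.rpow_add hu0]
    exact Real.rpow_le_rpow_of_exponent_le hu (by linarith)
  calc _ ≤ 3 ^ n * u ^ (t * n) * (u ^ a *
          (u ^ (a * n) * (2 ^ n * ((2 * C) ^ n * u ^ ((a - β) * n) + 1)))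
        + u ^ a * (((2 * C / s + 1) * u ^ (a * (s + 1) - β))
          * ((2 * C) ^ n * u ^ ((2 * a - β) * n)))) := by gcongr
    _ = 3 ^ n * (2 ^ n * (2 * C) ^ n * (u ^ (t * n) * (u ^ a * u ^ (a * n) * u ^ ((a - β) * n)))
        + 2 ^ n * (u ^ (t * n) * (u ^ a * u ^ (a * n)))
        + (2 * C / s + 1) * (2 * C) ^ n *
          (u ^ (t * n) * (u ^ a * u ^ (a * (s + 1) - β) * u ^ ((2 * a - β) * n)))) := by ring
    _ ≤ 3 ^ n * (2 ^ n * (2 * C) ^ n * u ^ E + 2 ^ n * u ^ E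
        + (2 * C / s + 1) * (2 * C) ^ n * u ^ E) := by gcongr
    _ = _ := by ring

theorem eventually_mul_rpow_lt {x y : ℝ} (C : ℝ) (hxy : x < y) :
    ∀ᶠ u : ℝ in atTop, C * u ^ x < u ^ y := by
  filter_upwards [(tendsto_rpow_atTop (sub_pos.2 hxy)).eventually_gt_atTop C,
    eventually_gt_atTop 0] with u h hu
  calc C * u ^ x < u ^ (y - x) * u ^ x := by gcongr
    _ = u ^ y := by rw [← Real.rpow_add hu]; ring_nf

/-- Hölder distortion bound between popcorn-type sets. The sets `S₂` and `S₁`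
range over `{G_{t₂,d}, F_{t₂,d}}` and `{G_{t₁,d}, F_{t₁,d}}` respectively. -/
theorem holder_distortion_of_popcorn_sets (d : ℕ) (hd : 2 ≤ d) (t₁ t₂ : ℝ)
    (h1 : 0 < t₁) (h12 : t₁ < t₂) (h2 : t₂ ≤ (d:ℝ)/((d:ℝ)-1))
    (S₁ S₂ : Set (EuclideanSpace ℝ (Fin d)))
    (hS₁ : S₁ = Gset t₁ d ∨ S₁ = Fset t₁ d) (hS₂ : S₂ = Gset t₂ d ∨ S₂ = Fset t₂ d)
    (α : ℝ) (hα0 : 0 < α) (hα1 : α ≤ 1)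
    (f : EuclideanSpace ℝ (Fin d) → EuclideanSpace ℝ (Fin d))
    (hHolder : ∃ c : ℝ, 0 < c ∧ ∀ x ∈ S₂, ∀ y ∈ S₂, ‖f x - f y‖ ≤ c * ‖x - y‖ ^ α)
    (hcover : S₁ ⊆ f '' S₂) :
    α ≤ (((d:ℝ)-1)*t₂ + t₁)/((d:ℝ)*t₂) := by
  obtain ⟨n, rfl⟩ : ∃ n, d = n + 1 := ⟨d - 1, by omega⟩
  have hn : 0 < n := by omega
  have hn1 : (1:ℝ) ≤ n := by exact_mod_cast hn
  have hS₁' : Gset t₁ (n + 1) ⊆ S₁ := by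
    rcases hS₁ with rfl | rfl
    · exact subset_rfl
    · exact Gset_subset_Fset t₁
  have hS₂' : S₂ ⊆ Fset t₂ (n + 1) := by
    rcases hS₂ with rfl | rfl
    · exact Gset_subset_Fset t₂
    · exact subset_rfl
  obtain ⟨c, hc, hf⟩ := hHolder
  have ht2 : 0 < t₂ := h1.trans h12
  push_cast at h2 ⊢
  rw [add_sub_cancel_right] at h2 ⊢
  rw [le_div_iff₀ (by linarith)] at h2
  by_contra hlt
  rw [not_le, div_lt_iff₀ (by positivity)] at hlt
  obtain ⟨β, hβ1, hβ2⟩ : ∃ β, (n * t₂ + t₁) / (n + 1) < β ∧ β < min (t₂ * α) (1 + t₁) := by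
    apply exists_between
    rw [lt_min_iff, div_lt_iff₀ (by positivity), div_lt_iff₀ (by positivity)]
    constructor <;> nlinarith
  rw [div_lt_iff₀ (by positivity)] at hβ1
  obtain ⟨hβα, hβs⟩ := lt_min_iff.1 hβ2
  -- with `η` as below, `a = 1 + 3η` and `b = 1 + 2η` leave a gap of `η` between the exponents
  obtain ⟨η, hη, hη1⟩ : ∃ η : ℝ, 0 < η ∧
      η * (2 * (n + 1) + 3 * t₁ + 1) = β * (n + 1) - t₂ * n - t₁ := by
    refine ⟨(β * (n + 1) - t₂ * n - t₁) / (2 * (n + 1) + 3 * t₁ + 1), ?_, ?_⟩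
    · apply div_pos
      · linarith
      · positivity
    · field_simp
  obtain ⟨a, ha⟩ : ∃ a, a = 1 + 3 * η := ⟨_, rfl⟩
  obtain ⟨b, hb⟩ : ∃ b, b = 1 + 2 * η := ⟨_, rfl⟩
  obtain ⟨E, hE⟩ : ∃ E, E = 2 * b * (n + 1) - η := ⟨_, rfl⟩
  have hs1 : 0 < η * t₁ := by positivity
  have hβa : β ≤ a * (t₁ + 1) := by subst ha; nlinarith
  have e1 : t₂ * n + a * (n + 1) ≤ E := by subst ha hb hE; nlinarith
  have e3 : t₂ * n + a + (a * (t₁ + 1) - β) + (2 * a - β) * n ≤ E := by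
    subst ha hb hE; nlinarith
  have e2 : t₂ * n + a * (n + 1) + (a - β) * n ≤ E := by linarith
  set C : ℝ := c * ((n + 1 : ℕ) : ℝ) ^ α with hC
  have hC0 : 0 ≤ C := by positivity
  set Ct : ℝ := 3 ^ n * (2 ^ n * (2 * C) ^ n + 2 ^ n + (2 * C / t₁ + 1) * (2 * C) ^ n) with hCt
  have ev1 := eventually_many_primes (a := a) (b := b) (by linarith) (by linarith)
  have ev2 := eventually_mul_rpow_lt (x := ((n + 1 : ℕ) : ℝ)) (y := b * ((n + 1 : ℕ) : ℝ))
    (2 * 2 ^ n) (by push_cast; nlinarith)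
  have ev3 := eventually_mul_rpow_lt (x := E) (y := b * ((n + 1 : ℕ) : ℝ) * (2 : ℕ))
    ((2 ^ n) ^ 2 * (4 * Ct)) (by push_cast; linarith)
  obtain ⟨Q, ⟨T, hT, hTcard⟩, hQ2, hQ3, hQ1⟩ := (tendsto_natCast_atTop_atTop (R := ℝ)).eventually
    (ev1.and (ev2.and (ev3.and (eventually_ge_atTop 1)))) |>.exists
  have hQ0 : (0:ℝ) < Q := by linarith
  have hQ : 0 < Q := by exact_mod_cast hQ0
  set L := ⌊(Q:ℝ) ^ b⌋₊ with hL
  have hQb : 1 ≤ (Q:ℝ) ^ b := Real.one_le_rpow hQ1 (by linarith)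
  have hL1 : (Q:ℝ) ^ b / 2 ≤ L := by
    have i1 : 1 ≤ L := Nat.le_floor (by exact_mod_cast hQb)
    have i2 : (1:ℝ) ≤ L := by exact_mod_cast i1
    have i3 := Nat.lt_floor_add_one ((Q:ℝ) ^ b)
    rw [← hL] at i3
    linarith
  have hL2 : (L:ℝ) ≤ (Q:ℝ) ^ a :=
    (Nat.floor_le (by positivity)).trans (Real.rpow_le_rpow_of_exponent_le hQ1 (by linarith))
  -- the index set has at least `2^{-n} Q^{b(n+1)}` elements
  have hsize : (Q:ℝ) ^ (b * ((n + 1 : ℕ) : ℝ)) ≤ 2 ^ n * ((T.card * L ^ n : ℕ) : ℝ) := by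
    rw [Real.rpow_mul_natCast hQ0.le, pow_succ]
    push_cast
    calc ((Q:ℝ) ^ b) ^ n * (Q:ℝ) ^ b = 2 ^ n * ((Q:ℝ) ^ b * ((Q:ℝ) ^ b / 2) ^ n) := by
          rw [div_pow]; field_simp
      _ ≤ _ := by gcongr
  have hbig : 2 * Q ^ (n + 1) ≤ T.card * L ^ n := by
    have i1 : 2 ^ n * (2 * (Q:ℝ) ^ (n + 1)) ≤ 2 ^ n * ((T.card * L ^ n : ℕ) : ℝ) := by
      refine le_trans ?_ (hQ2.le.trans hsize)
      rw [Real.rpow_natCast]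
      linarith
    have i2 := le_of_mul_le_mul_left i1 (by positivity)
    exact_mod_cast i2
  have hr : c * (((n + 1 : ℕ) : ℝ) * (Q:ℝ) ^ (-t₂)) ^ α ≤ C * (Q:ℝ) ^ (-β) := by
    rw [Real.mul_rpow (by positivity) (by positivity), ← Real.rpow_mul hQ0.le, ← mul_assoc]
    have : (Q:ℝ) ^ (-t₂ * α) ≤ (Q:ℝ) ^ (-β) :=
      Real.rpow_le_rpow_of_exponent_le hQ1 (by linarith)
    gcongr
  have hcount := counting hn h1 ht2 hS₁' hS₂' hα0 hc hf hcover hQ (P := (Q:ℝ) ^ a)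
    (by positivity) hT hr hbig
  have hupper := pair_bound_le hQ1 hC0 h1 hβa e1 e2 e3 hL2
  have hfinal : ((Q:ℝ) ^ (b * ((n + 1 : ℕ) : ℝ))) ^ 2 ≤ (2 ^ n) ^ 2 * (4 * Ct) * (Q:ℝ) ^ E := by
    calc _ ≤ (2 ^ n * ((T.card * L ^ n : ℕ) : ℝ)) ^ 2 := by gcongr
      _ = (2 ^ n) ^ 2 * ((T.card * L ^ n : ℕ) : ℝ) ^ 2 := by rw [mul_pow]
      _ ≤ (2 ^ n) ^ 2 * (4 * (Ct * (Q:ℝ) ^ E)) := by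
          gcongr
          exact hcount.trans (by gcongr)
      _ = _ := by ring
  rw [← Real.rpow_mul_natCast hQ0.le] at hfinal
  exact absurd hQ3 (not_lt.2 hfinal)
end

section
/- Let d ≥ 2 be an integer, let 0 < t < d/(d−1), and let ε satisfy 0 < ε < (1/16)·min{ dt/(t+d) − t/(t+1), 1 − dt/(d+t) }. Then for all sufficiently small δ > 0 and for every integer k with ⌊δ^{dt/(t+d)−1−ε}⌋ ≤ k ≤ ⌊δ^{t/(t+1)−1+ε}⌋, there exists at least one n ∈ ℕ such that kδ ≤ n^{−t} < (k+1)δ. -/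
/-!
Passing from one integer `n` to the next changes `n ^ (-t)` by a factor `(1 + 1/n) ^ t`, which is
at most `1 + 1/k` as soon as `n ≥ 2tk`. So the largest `n` with `kδ ≤ n ^ (-t)`, namely
`⌊(kδ) ^ (-1/t)⌋`, also satisfies `n ^ (-t) < (k+1)δ`, provided `(kδ) ^ (-1/t) ≥ (2t+1)k`
(`exists_nat_rpow_mem_layer`). The proviso amounts to `(2t+1)^t * k^(t+1) * δ ≤ 1`, which the upper
bound `k ≤ δ ^ (-1/(t+1) + ε)` gives once `2t+1 ≤ δ ^ (-ε)`. The lower bound on `k` serves only to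
ensure `k ≥ 1`.
-/

open Set MeasureTheory Filter

/-- The ratio of consecutive values of `n ^ (-t)` is at most `1 + 1/k`. -/
lemma one_add_inv_rpow_le {t k n : ℝ} (ht : 0 < t) (hk : 1 ≤ k) (hn : 2 * t * k ≤ n) :
    (1 + 1 / n) ^ t ≤ 1 + 1 / k := by
  have hn0 : 0 < n := lt_of_lt_of_le (by positivity) hn
  have h2 : t / n ≤ 1 / (2 * k) := by
    rw [div_le_div_iff₀ hn0 (by positivity)]; linarith
  have h3 : 1 / (2 * k) ≤ 1 / 2 := by
    rw [div_le_div_iff₀ (by positivity) (by positivity)]; linarith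
  have h0 : 0 < t / n := by positivity
  have hexp : Real.exp (t / n) ≤ 1 + 2 * (t / n) := by
    have h := Real.abs_exp_sub_one_sub_id_le (x := t / n) (by rw [abs_of_pos h0]; linarith)
    have := (abs_le.1 h).2
    nlinarith
  calc (1 + 1 / n) ^ t ≤ (Real.exp (1 / n)) ^ t := by
        gcongr
        linarith [Real.add_one_le_exp (1 / n)]
    _ = Real.exp (t / n) := by rw [← Real.exp_mul]; congr 1; ring
    _ ≤ 1 + 2 * (t / n) := hexp
    _ ≤ 1 + 2 * (1 / (2 * k)) := by linarith
    _ = 1 + 1 / k := by field_simp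

/-- The layer `[kδ, (k+1)δ)` contains some `n ^ (-t)` whenever `kδ ≤ ((2t+1)k) ^ (-t)`. -/
lemma exists_nat_rpow_mem_layer {t δ k : ℝ} (ht : 0 < t) (hδ : 0 < δ) (hk : 1 ≤ k)
    (h : k * δ ≤ ((2 * t + 1) * k) ^ (-t)) :
    ∃ n : ℕ, 0 < n ∧ k * δ ≤ (n : ℝ) ^ (-t) ∧ (n : ℝ) ^ (-t) < (k + 1) * δ := by
  have hkδ : 0 < k * δ := by positivity
  set y : ℝ := (k * δ) ^ (-t)⁻¹ with hy
  have hy0 : 0 < y := by positivity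
  have hyt : y ^ (-t) = k * δ := Real.rpow_inv_rpow hkδ.le (by linarith)
  have hmy : (2 * t + 1) * k ≤ y := by
    rw [← hyt] at h
    exact (Real.rpow_le_rpow_iff_of_neg hy0 (by positivity) (by linarith)).1 h
  have hfl : (⌊y⌋₊ : ℝ) ≤ y := Nat.floor_le hy0.le
  have hlt : y < ⌊y⌋₊ + 1 := Nat.lt_floor_add_one y
  have hn : 2 * t * k ≤ (⌊y⌋₊ : ℝ) := by linarith
  have hn0 : (0 : ℝ) < ⌊y⌋₊ := lt_of_lt_of_le (by positivity) hn
  refine ⟨⌊y⌋₊, by exact_mod_cast hn0, ?_, ?_⟩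
  · rw [← hyt]
    exact (Real.rpow_le_rpow_iff_of_neg hy0 hn0 (by linarith)).2 hfl
  · generalize (⌊y⌋₊ : ℝ) = n at *
    have hsucc : (n + 1) ^ (-t) < k * δ := by
      rw [← hyt]
      exact (Real.rpow_lt_rpow_iff_of_neg (by positivity) hy0 (by linarith)).2 hlt
    have hratio : n ^ (-t) = (n + 1) ^ (-t) * (1 + 1 / n) ^ t := by
      have : 1 + 1 / n = (n + 1) / n := by field_simp
      rw [this, Real.div_rpow (by positivity) hn0.le, Real.rpow_neg (x := n + 1) (by positivity),
        Real.rpow_neg hn0.le]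
      have : (n + 1) ^ t ≠ 0 := by positivity
      field_simp
    calc n ^ (-t) = (n + 1) ^ (-t) * (1 + 1 / n) ^ t := hratio
      _ < (k * δ) * (1 + 1 / n) ^ t := by gcongr
      _ ≤ (k * δ) * (1 + 1 / k) := by gcongr; exact one_add_inv_rpow_le ht hk hn
      _ = (k + 1) * δ := by field_simp

/-- existence of an integer `n` with `kδ ≤ n^{-t} < (k+1)δ` in the relevant
range of `k`. -/
theorem exists_n_in_layer (d : ℕ) (hd : 2 ≤ d) (t : ℝ) (ht : 0 < t)
    (ht' : t < (d:ℝ)/((d:ℝ)-1)) (ε : ℝ) (hε : 0 < ε)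
    (hε' : ε < (1/16) * min ((d:ℝ)*t/(t+(d:ℝ)) - t/(t+1)) (1 - (d:ℝ)*t/((d:ℝ)+t))) :
    ∃ δ₁ : ℝ, 0 < δ₁ ∧ ∀ δ : ℝ, 0 < δ → δ < δ₁ →
      ∀ k : ℕ, Nat.floor (δ ^ ((d:ℝ)*t/(t+(d:ℝ)) - 1 - ε)) ≤ k →
        k ≤ Nat.floor (δ ^ (t/(t+1) - 1 + ε)) →
        ∃ n : ℕ, 0 < n ∧ (k:ℝ)*δ ≤ (n:ℝ) ^ (-t) ∧ (n:ℝ) ^ (-t) < ((k:ℝ)+1)*δ := by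
  have hd0 : (2 : ℝ) ≤ d := by exact_mod_cast hd
  have hdt : (d : ℝ) * t / (t + d) < 1 := by
    rw [lt_div_iff₀ (by linarith)] at ht'
    rw [div_lt_one (by linarith)]
    linarith
  -- This threshold makes `2t + 1 ≤ δ ^ (-ε)`.
  refine ⟨(2 * t + 1) ^ (-ε)⁻¹, by positivity, fun δ hδ hδ₁ k hk1 hk2 => ?_⟩
  have hδε : 2 * t + 1 ≤ δ ^ (-ε) := by
    have := (Real.rpow_le_rpow_iff_of_neg (z := -ε) (by positivity) hδ (by linarith)).2 hδ₁.le
    rwa [Real.rpow_inv_rpow (by positivity) (by linarith)] at this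
  have hδ1 : δ ≤ 1 := hδ₁.le.trans
    (Real.rpow_le_one_of_one_le_of_nonpos (by linarith)
      (inv_nonpos.2 (by linarith)))
  have hk : 1 ≤ k := le_trans (Nat.le_floor (by
    rw [Nat.cast_one]
    exact Real.one_le_rpow_of_pos_of_le_one_of_nonpos hδ hδ1 (by linarith))) hk1
  have hkR : (1 : ℝ) ≤ k := by exact_mod_cast hk
  have hkle : (k : ℝ) ≤ δ ^ (t / (t + 1) - 1 + ε) :=
    (Nat.cast_le.2 hk2).trans (Nat.floor_le (by positivity))
  refine exists_nat_rpow_mem_layer ht hδ hkR ?_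
  set m : ℝ := (2 * t + 1) * k with hm
  have hm0 : 0 < m := by positivity
  have hkm : (k : ℝ) ≤ m := by nlinarith
  have hmle : m ≤ δ ^ (-(t + 1)⁻¹) := by
    calc m ≤ δ ^ (-ε) * δ ^ (t / (t + 1) - 1 + ε) := by rw [hm]; gcongr
      _ = δ ^ (-(t + 1)⁻¹) := by
        rw [← Real.rpow_add hδ]; congr 1; field_simp; ring
  have hmt : m ^ t * m ≤ δ⁻¹ := by
    calc m ^ t * m = m ^ (t + 1) := by rw [Real.rpow_add hm0, Real.rpow_one]
      _ ≤ (δ ^ (-(t + 1)⁻¹)) ^ (t + 1) := by gcongr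
      _ = δ⁻¹ := by
        rw [← Real.rpow_mul hδ.le, neg_mul, inv_mul_cancel₀ (by positivity), Real.rpow_neg_one]
  have hmk : m ^ t * k ≤ δ⁻¹ := le_trans (by gcongr) hmt
  rw [Real.rpow_neg hm0.le, ← one_div, le_div_iff₀ (by positivity)]
  calc k * δ * m ^ t = m ^ t * k * δ := by ring
    _ ≤ δ⁻¹ * δ := by gcongr
    _ = 1 := inv_mul_cancel₀ hδ.ne'
end

section
/- Let d ≥ 2 be an integer. There exists a constant c > 0 depending only on d such that for all δ > 0 and all distinct integers q, k ≥ 2, ℒ_{d-1}( E^{(d-1)}(δ,q) ∩ E^{(d-1)}(δ,k) ) ≤ c · (q · k · δ²)^{d-1}. -/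
/-!
The set `Eset d δ n` is a product of `d - 1` copies of the one-dimensional set `Eline δ n`, and so is
the intersection of two such sets, so it suffices to show that `Eline δ q ∩ Eline δ k` has
length at most `8 q k δ²`.

The intersection is covered by the intervals of length `2δ` around those reduced fractions `m/q` for
which some reduced fraction `n/k` satisfies `|m/q - n/k| < 2δ`. Write `q = g q'`, `k = g k'` with
`g = gcd(q, k)`. Then `m/q - n/k = r / (g q' k')` with the integer `r = m k' - n q'`, which is nonzero
since distinct denominators give distinct reduced fractions. So `0 < |r| < 2δ g q' k'`, leaving at
most `4δ g q' k'` values of `r`. Each value is taken at most `g` times, because `r` determines `m`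
modulo `q'` and `m < g q'`. Thus there are at most `4δ q k` pairs (`card_closePairs_le`).
-/

open Set MeasureTheory Filter

/-- The one-dimensional set: all reals within `δ` of a reduced fraction in `(0, 1)` with
denominator `n`. -/
def Eline (δ : ℝ) (n : ℕ) : Set ℝ :=
  {x | ∃ m : ℕ, (1 ≤ m ∧ m < n ∧ Nat.Coprime m n) ∧
    x ∈ Set.Ioo ((m : ℝ) / (n : ℝ) - δ) ((m : ℝ) / (n : ℝ) + δ)}

lemma isOpen_Eline (δ : ℝ) (n : ℕ) : IsOpen (Eline δ n) := by
  have h : Eline δ n = ⋃ m ∈ {m : ℕ | 1 ≤ m ∧ m < n ∧ Nat.Coprime m n},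
      Set.Ioo ((m : ℝ) / (n : ℝ) - δ) ((m : ℝ) / (n : ℝ) + δ) := by
    ext x
    simp only [Eline, Set.mem_iUnion, Set.mem_ofPred_eq, exists_prop]
  rw [h]
  exact isOpen_biUnion fun _ _ => isOpen_Ioo

lemma mem_Eset_iff (d : ℕ) (δ : ℝ) (n : ℕ) (z : EuclideanSpace ℝ (Fin (d - 1))) :
    z ∈ Eset d δ n ↔ ∀ i, z i ∈ Eline δ n := by
  constructor
  · rintro ⟨m, hm, hz⟩ i
    exact ⟨m i, hm i, hz i⟩
  · intro h
    choose m hm hz using h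
    exact ⟨m, hm, hz⟩

open Classical in
/-- The pairs `(m, n)` of numerators of reduced fractions `m/q`, `n/k` at distance less
than `2δ`. -/
noncomputable def closePairs (δ : ℝ) (q k : ℕ) : Finset (ℕ × ℕ) :=
  {p ∈ Finset.range q ×ˢ Finset.range k | Nat.Coprime p.1 q ∧ Nat.Coprime p.2 k ∧
    |(p.1 : ℝ) / q - (p.2 : ℝ) / k| < 2 * δ}

lemma cross_mul_ne {q k m n : ℕ} (hqk : q ≠ k) (hm : Nat.Coprime m q) (hn : Nat.Coprime n k) :
    m * k ≠ n * q := by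
  intro h
  have h1 : q ∣ k := hm.symm.dvd_of_dvd_mul_left (Dvd.intro_left n h.symm)
  have h2 : k ∣ q := hn.symm.dvd_of_dvd_mul_left (Dvd.intro_left m h)
  exact hqk (Nat.dvd_antisymm h1 h2)

/-- The number of close pairs, for denominators written as `g * a` and `g * b` with `a`, `b`
coprime. The pair `(m, n)` is encoded by the nonzero integer `m b - n a` together with the block
`m / a < g` of `m`. -/
lemma card_closePairs_le_aux (δ : ℝ) (hδ : 0 < δ) (g a b : ℕ) (hg : 0 < g) (ha : 0 < a)
    (hb : 0 < b) (hab : Nat.Coprime a b) (hne : g * a ≠ g * b) :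
    ((closePairs δ (g * a) (g * b)).card : ℝ) ≤ 4 * δ * ((g * a) * (g * b)) := by
  have hgR : (0 : ℝ) < g := by exact_mod_cast hg
  have haR : (0 : ℝ) < a := by exact_mod_cast ha
  have hbR : (0 : ℝ) < b := by exact_mod_cast hb
  set X : ℝ := 2 * δ * (g * a * b) with hX
  have hX0 : 0 < X := by positivity
  set N : ℕ := ⌊X⌋₊ with hN
  have hcard : (closePairs δ (g * a) (g * b)).card ≤
      (((Finset.Icc (-(N : ℤ)) N).erase 0) ×ˢ Finset.range g).card := by
    apply Finset.card_le_card_of_injOn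
      (fun p : ℕ × ℕ => ((p.1 : ℤ) * b - (p.2 : ℤ) * a, p.1 / a))
    · rintro ⟨m, n⟩ hp
      simp only [closePairs, Finset.coe_filter, Finset.mem_product, Finset.mem_range,
        Set.mem_ofPred_eq] at hp
      obtain ⟨⟨hm, -⟩, hmq, hnk, hlt⟩ := hp
      have hr0 : (m : ℤ) * b - (n : ℤ) * a ≠ 0 := by
        intro h
        apply cross_mul_ne hne hmq hnk
        have h' : m * b = n * a := by
          have : (m : ℤ) * b = n * a := by linarith
          exact_mod_cast this
        linear_combination g * h'
      have hrX : |((m : ℝ) * b - n * a)| < X := by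
        have e : (m : ℝ) * b - n * a =
            ((m : ℝ) / ((g * a : ℕ) : ℝ) - (n : ℝ) / ((g * b : ℕ) : ℝ)) * (g * a * b) := by
          push_cast
          field_simp
        rw [e, abs_mul, abs_of_pos (by positivity : (0 : ℝ) < g * a * b)]
        exact mul_lt_mul_of_pos_right hlt (by positivity)
      have hrN : |(m : ℤ) * b - (n : ℤ) * a| ≤ N := by
        have h1 : ((m : ℤ) * b - (n : ℤ) * a).natAbs ≤ N := by
          apply Nat.le_floor
          rw [Nat.cast_natAbs]
          push_cast
          exact hrX.le
        rw [Int.abs_eq_natAbs]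
        exact_mod_cast h1
      simp only [Finset.coe_product, Set.mem_prod, Finset.mem_coe, Finset.mem_erase,
        Finset.mem_Icc, Finset.mem_range]
      exact ⟨⟨hr0, abs_le.mp hrN⟩, Nat.div_lt_of_lt_mul (by rwa [mul_comm] at hm)⟩
    · rintro ⟨m, n⟩ - ⟨m', n'⟩ - h
      simp only [Prod.mk.injEq] at h
      obtain ⟨h1, h2⟩ := h
      have hdvd : (a : ℤ) ∣ ((m' : ℤ) - m) * b := ⟨(n' : ℤ) - n, by linear_combination -h1⟩
      have hmod : (a : ℤ) ∣ (m' : ℤ) - m :=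
        (Nat.isCoprime_iff_coprime.mpr hab).dvd_of_dvd_mul_right hdvd
      have hmod' : m % a = m' % a := (Nat.modEq_iff_dvd.mpr hmod)
      have hm : m = m' := by
        rw [← Nat.div_add_mod m a, ← Nat.div_add_mod m' a, h2, hmod']
      subst hm
      have hn : (n : ℤ) * a = n' * a := by linarith
      have hn' : n = n' := by
        exact_mod_cast mul_right_cancel₀ (by exact_mod_cast ha.ne') hn
      rw [hn']
  have hcard' : (((Finset.Icc (-(N : ℤ)) N).erase 0) ×ˢ Finset.range g).card = 2 * N * g := by
    rw [Finset.card_product, Finset.card_range, Finset.card_erase_of_mem (by simp), Int.card_Icc]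
    congr 1
    omega
  rw [hcard'] at hcard
  calc ((closePairs δ (g * a) (g * b)).card : ℝ) ≤ ((2 * N * g : ℕ) : ℝ) := by exact_mod_cast hcard
    _ = 2 * (N : ℝ) * g := by push_cast; ring
    _ ≤ 2 * X * g := by
        gcongr
        exact Nat.floor_le hX0.le
    _ = 4 * δ * ((g * a) * (g * b)) := by rw [hX]; ring

lemma card_closePairs_le (δ : ℝ) (hδ : 0 < δ) (q k : ℕ) (hq : 0 < q) (hk : 0 < k)
    (hqk : q ≠ k) : ((closePairs δ q k).card : ℝ) ≤ 4 * δ * (q * k) := by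
  obtain ⟨g, a, b, hg, hab, rfl, rfl⟩ := Nat.exists_coprime' (m := q) (n := k)
    (Nat.gcd_pos_of_pos_left k hq)
  rw [mul_comm a g, mul_comm b g] at *
  have := card_closePairs_le_aux δ hδ g a b hg (Nat.pos_of_mul_pos_left hq)
    (Nat.pos_of_mul_pos_left hk) hab hqk
  push_cast
  exact this

lemma volume_Eline_inter_le (δ : ℝ) (hδ : 0 < δ) (q k : ℕ) (hq : 0 < q) (hk : 0 < k)
    (hqk : q ≠ k) :
    volume (Eline δ q ∩ Eline δ k) ≤ ENNReal.ofReal (8 * ((q : ℝ) * k * δ ^ 2)) := by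
  have hsub : Eline δ q ∩ Eline δ k ⊆ ⋃ p ∈ closePairs δ q k,
      Set.Ioo ((p.1 : ℝ) / q - δ) ((p.1 : ℝ) / q + δ) := by
    rintro x ⟨⟨m, ⟨-, hmq, hm⟩, hx⟩, ⟨n, ⟨-, hnk, hn⟩, hy⟩⟩
    refine Set.mem_biUnion (x := (m, n)) ?_ hx
    simp only [closePairs, Finset.coe_filter, Finset.mem_product, Finset.mem_range,
      Set.mem_ofPred_eq]
    refine ⟨⟨hmq, hnk⟩, hm, hn, ?_⟩
    rw [abs_lt]
    constructor <;> linarith [hx.1, hx.2, hy.1, hy.2]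
  calc volume (Eline δ q ∩ Eline δ k)
      ≤ ∑ p ∈ closePairs δ q k, volume (Set.Ioo ((p.1 : ℝ) / q - δ) ((p.1 : ℝ) / q + δ)) :=
        (measure_mono hsub).trans (measure_biUnion_finset_le _ _)
    _ = ∑ p ∈ closePairs δ q k, ENNReal.ofReal (2 * δ) := by
        refine Finset.sum_congr rfl fun p _ => ?_
        rw [Real.volume_Ioo]
        congr 1
        ring
    _ = ENNReal.ofReal ((closePairs δ q k).card * (2 * δ)) := by
        rw [Finset.sum_const, nsmul_eq_mul, ENNReal.ofReal_mul (Nat.cast_nonneg _),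
          ENNReal.ofReal_natCast]
    _ ≤ ENNReal.ofReal (8 * ((q : ℝ) * k * δ ^ 2)) := by
        apply ENNReal.ofReal_le_ofReal
        calc ((closePairs δ q k).card : ℝ) * (2 * δ) ≤ 4 * δ * (q * k) * (2 * δ) := by
              gcongr
              exact card_closePairs_le δ hδ q k hq hk hqk
          _ = _ := by ring

/-- the higher-dimensional Duffin–Schaeffer type estimate. -/
theorem higher_dimensional_duffin_schaeffer (d : ℕ) (hd : 2 ≤ d) :
    ∃ c : ℝ, 0 < c ∧ ∀ δ : ℝ, 0 < δ → ∀ q k : ℕ, 2 ≤ q → 2 ≤ k → q ≠ k →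
      volume (Eset d δ q ∩ Eset d δ k) ≤
        ENNReal.ofReal (c * ((q:ℝ) * (k:ℝ) * δ^2)^(d-1)) := by
  refine ⟨8 ^ (d - 1), by positivity, fun δ hδ q k hq hk hqk => ?_⟩
  have hprod : Eset d δ q ∩ Eset d δ k =
      (WithLp.ofLp : EuclideanSpace ℝ (Fin (d - 1)) → Fin (d - 1) → ℝ) ⁻¹'
        Set.pi Set.univ (fun _ => Eline δ q ∩ Eline δ k) := by
    ext z
    simp only [Set.mem_inter_iff, mem_Eset_iff, Set.mem_preimage, Set.mem_pi, Set.mem_univ,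
      true_imp_iff, forall_and]
  have hmeas : MeasurableSet (Set.pi Set.univ
      (fun _ : Fin (d - 1) => Eline δ q ∩ Eline δ k)) :=
    MeasurableSet.univ_pi fun _ =>
      ((isOpen_Eline δ q).inter (isOpen_Eline δ k)).measurableSet
  rw [hprod, (PiLp.volume_preserving_ofLp (Fin (d - 1))).measure_preimage
    hmeas.nullMeasurableSet, volume_pi_pi, Finset.prod_const, Finset.card_univ, Fintype.card_fin,
    ← mul_pow, ENNReal.ofReal_pow (by positivity)]
  gcongr
  exact volume_Eline_inter_le δ hδ q k (by omega) (by omega) hqk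
end

section
/- Let d ≥ 2 be an integer, 0 < t < d/(d−1), and (d−1)t/d ≤ θ ≤ 1. Then the upper θ-intermediate dimension of F_{t,d} satisfies \overline{dim}_θ F_{t,d} ≤ d²θ/(dθ + t). -/
/-! A cover with two scales suffices. Put `a = d / (dθ + t)`, `Q = δ^(-a)` and `H = Q^(-t) = δ^(at)`.
The at most `(2Q)^d` points of `F_{t,d}` with denominator `q ≤ Q` are covered one by one by balls of
the smallest admissible diameter `δ^(1/θ)`, at a cost `≲ δ^(s/θ - ad)`. All the other points lie in
the slab `[0,1]^(d-1) × [0,H]`. The hypothesis `(d-1)t/d ≤ θ` says exactly that `at ≤ 1`, i.e.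
`δ ≤ H`, so `≲ δ^(-d) H` balls of the largest admissible diameter `δ` cover the slab, at a cost
`≲ δ^(s - d + at)`. The choice of `a` makes both exponents vanish at `s = d²θ/(dθ + t)`;
hence both costs tend to `0` as `δ → 0` for every larger `s`. -/


open Set MeasureTheory Filter

/-- The point of `ℝ^d` with first `d - 1` coordinates `x` and last coordinate `y`. -/
def pyramidPoint (d : ℕ) (x : Fin (d-1) → ℝ) (y : ℝ) : EuclideanSpace ℝ (Fin d) :=
  WithLp.toLp 2 fun j => if h : (j : ℕ) < d - 1 then x ⟨j, h⟩ else y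

lemma eq_pyramidPoint {d : ℕ} {z : EuclideanSpace ℝ (Fin d)} {x : Fin (d-1) → ℝ} {y : ℝ}
    (hx : ∀ i : Fin (d-1), z (Fin.castLE (Nat.sub_le d 1) i) = x i)
    (hy : ∀ j : Fin d, (j : ℕ) = d - 1 → z j = y) : z = pyramidPoint d x y := by
  ext j
  by_cases h : (j : ℕ) < d - 1
  · simpa [pyramidPoint, h] using hx ⟨j, h⟩
  · simpa [pyramidPoint, h] using hy j (by omega)

lemma dist_pyramidPoint_le {d : ℕ} {x x' : Fin (d-1) → ℝ} {y y' h : ℝ} (h0 : 0 ≤ h)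
    (hx : ∀ i, |x i - x' i| ≤ h) (hy : |y - y'| ≤ h) :
    dist (pyramidPoint d x y) (pyramidPoint d x' y') ≤ d * h := by
  rw [EuclideanSpace.dist_eq]
  apply Real.sqrt_le_iff.2 ⟨by positivity, ?_⟩
  have key : ∀ j : Fin d, dist (pyramidPoint d x y j) (pyramidPoint d x' y' j) ^ 2 ≤ h ^ 2 := by
    intro j
    gcongr
    by_cases hj : (j : ℕ) < d - 1
    · simpa [pyramidPoint, hj, Real.dist_eq] using hx _
    · simpa [pyramidPoint, hj, Real.dist_eq] using hy
  have h1 : (d : ℝ) ≤ (d : ℝ) ^ 2 := by exact_mod_cast Nat.le_self_pow two_ne_zero d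
  calc _ ≤ ∑ _j : Fin d, h ^ 2 := Finset.sum_le_sum fun j _ => key j
    _ = d * h ^ 2 := by simp
    _ ≤ d ^ 2 * h ^ 2 := by gcongr
    _ = _ := by ring

/-- Rounding a number of `[0,L]` down to the grid of mesh `h`. -/
lemma exists_grid {h L x : ℝ} (hh : 0 < h) (hx0 : 0 ≤ x) (hxL : x ≤ L) :
    ∃ k : Fin (⌊L / h⌋₊ + 1), |x - (k : ℕ) * h| ≤ h := by
  have hk : ⌊x / h⌋₊ < ⌊L / h⌋₊ + 1 := Nat.lt_succ_of_le (Nat.floor_mono (by gcongr))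
  refine ⟨⟨_, hk⟩, ?_⟩
  have h1 : (⌊x / h⌋₊ : ℝ) * h ≤ x := (le_div_iff₀ hh).1 (Nat.floor_le (by positivity))
  have h2 : x < (⌊x / h⌋₊ + 1 : ℝ) * h := (div_lt_iff₀ hh).1 (Nat.lt_floor_add_one _)
  rw [abs_le]
  constructor <;> simp only <;> linarith

lemma floor_add_one_le {x : ℝ} (hx : 1 ≤ x) : ((⌊x⌋₊ + 1 : ℕ) : ℝ) ≤ 2 * x := by
  have := Nat.floor_le (zero_le_one.trans hx)
  push_cast
  linarith

/-- The two-scale cover: small balls (diameter `r`) around the points of `F_{t,d}` with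
denominator `≤ Q`, and balls of diameter `δ` covering `[0,1]^(d-1) × [0,Q^(-t)]`. -/
lemma exists_cover (d : ℕ) (hd : 2 ≤ d) {t : ℝ} (ht : 0 < t) {Q r δ s : ℝ} (hQ : 1 ≤ Q)
    (hr : 0 < r) (hrδ : r ≤ δ) (hδ1 : δ ≤ 1) (hδQ : δ ≤ Q ^ (-t)) :
    ∃ (m : ℕ) (U : Fin m → Set (EuclideanSpace ℝ (Fin d))),
      Fset t d ⊆ (⋃ i, U i) ∧ (∀ i, r ≤ Metric.diam (U i) ∧ Metric.diam (U i) ≤ δ) ∧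
      (∑ i, Metric.diam (U i) ^ s) ≤
        (2 * Q) ^ d * r ^ s + (4 * d / δ) ^ d * Q ^ (-t) * δ ^ s := by
  have hδ : 0 < δ := hr.trans_le hrδ
  have hd0 : (2 : ℝ) ≤ d := by exact_mod_cast hd
  have : Nonempty (Fin d) := ⟨⟨0, by omega⟩⟩
  set H : ℝ := Q ^ (-t) with hH
  -- Rounding all coordinates to mesh `h` moves a point by at most `d * h = δ / 2`.
  set h : ℝ := δ / (2 * d) with hh
  have hpos : 0 < h := by positivity
  have hhδ : h ≤ δ := div_le_self hδ.le (by linarith)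
  set N := ⌊Q⌋₊
  let A := Fin (N + 1) × (Fin (d-1) → Fin (N + 1))
  let B := Fin (⌊H / h⌋₊ + 1) × (Fin (d-1) → Fin (⌊1 / h⌋₊ + 1))
  let V : A ⊕ B → Set (EuclideanSpace ℝ (Fin d)) := Sum.elim
    (fun a => Metric.closedBall
      (pyramidPoint d (fun i => ((a.2 i : ℕ) : ℝ) / ((a.1 : ℕ) : ℝ)) (((a.1 : ℕ) : ℝ) ^ (-t)))
      (r / 2))
    (fun b => Metric.closedBall
      (pyramidPoint d (fun i => ((b.2 i : ℕ) : ℝ) * h) (((b.1 : ℕ) : ℝ) * h)) (δ / 2))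
  have diamA : ∀ a, Metric.diam (V (Sum.inl a)) = r := fun a => by
    simp only [V, Sum.elim_inl]
    rw [Metric.diam_closedBall_eq _ (by positivity)]
    ring
  have diamB : ∀ b, Metric.diam (V (Sum.inr b)) = δ := fun b => by
    simp only [V, Sum.elim_inr]
    rw [Metric.diam_closedBall_eq _ (by positivity)]
    ring
  have slab : ∀ (x : Fin (d-1) → ℝ) (y : ℝ), (∀ i, x i ∈ Set.Icc (0 : ℝ) 1) → 0 ≤ y → y ≤ H →
      ∃ i, pyramidPoint d x y ∈ V i := by
    intro x y hx hy0 hyH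
    obtain ⟨k, hk⟩ := exists_grid hpos hy0 hyH
    choose l hl using fun i => exists_grid hpos (hx i).1 (hx i).2
    refine ⟨Sum.inr (k, l), ?_⟩
    have := dist_pyramidPoint_le (d := d) hpos.le hl hk
    have h2 : d * h = δ / 2 := by rw [hh]; field_simp
    simpa [V, h2] using this
  have cover : ∀ z ∈ Fset t d, ∃ i, z ∈ V i := by
    rintro z (⟨q, p, hp, hx, hy⟩ | ⟨hx, hy⟩)
    · rw [eq_pyramidPoint hx hy]
      have hq : 0 < q := by
        have := hp ⟨0, by omega⟩
        omega
      have hq0 : (0 : ℝ) < q := by exact_mod_cast hq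
      by_cases hqN : q ≤ N
      · refine ⟨Sum.inl (⟨q, by omega⟩, fun i => ⟨p i, by have := hp i; omega⟩), ?_⟩
        simpa [V] using (half_pos hr).le
      · refine slab _ _ (fun i => ⟨by positivity, ?_⟩) (by positivity) ?_
        · rw [div_le_one hq0]
          exact_mod_cast (hp i).2.le
        · have : Q ≤ q := ((Nat.floor_lt (by linarith)).1 (not_le.1 hqN)).le
          exact Real.rpow_le_rpow_of_nonpos (by linarith) this (by linarith)
    · rw [eq_pyramidPoint (fun _ => rfl) hy]
      exact slab _ _ hx le_rfl (by positivity)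
  have cardA : (Fintype.card A : ℝ) ≤ (2 * Q) ^ d := by
    have : Fintype.card A = (N + 1) ^ d := by
      simp only [A, Fintype.card_prod, Fintype.card_pi, Fintype.card_fin, Finset.prod_const,
        Finset.card_univ]
      rw [mul_comm, ← pow_succ, Nat.sub_add_cancel (by omega)]
    rw [this, Nat.cast_pow]
    gcongr
    exact floor_add_one_le hQ
  have cardB : (Fintype.card B : ℝ) ≤ (4 * d / δ) ^ d * H := by
    have e : Fintype.card B = (⌊H / h⌋₊ + 1) * (⌊1 / h⌋₊ + 1) ^ (d - 1) := by
      simp [B]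
    rw [e, Nat.cast_mul, Nat.cast_pow]
    calc _ ≤ (2 * (H / h)) * (2 * (1 / h)) ^ (d - 1) := by
          gcongr
          · exact floor_add_one_le ((one_le_div hpos).2 (hhδ.trans hδQ))
          · exact floor_add_one_le ((one_le_div hpos).2 (hhδ.trans hδ1))
      _ = (2 * (1 / h)) ^ (d - 1 + 1) * H := by ring
      _ = _ := by
          rw [Nat.sub_add_cancel (by omega), hh]
          congr 2
          field_simp
          norm_num
  let e := Fintype.equivFin (A ⊕ B)
  refine ⟨_, fun i => V (e.symm i), ?_, ?_, ?_⟩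
  · intro z hz
    obtain ⟨i, hi⟩ := cover z hz
    exact Set.mem_iUnion.2 ⟨e i, by simpa using hi⟩
  · intro i
    beta_reduce
    rcases e.symm i with a | b
    · rw [diamA]; exact ⟨le_rfl, hrδ⟩
    · rw [diamB]; exact ⟨hrδ, le_rfl⟩
  · rw [Equiv.sum_comp e.symm (fun i => Metric.diam (V i) ^ s), Fintype.sum_sum_type]
    simp only [diamA, diamB, Finset.sum_const, Finset.card_univ, nsmul_eq_mul]
    gcongr

/-- upper bound for the upper θ-intermediate dimension of `F_{t,d}`. -/
theorem upper_intermediate_dimension_bound (d : ℕ) (hd : 2 ≤ d) (t : ℝ) (ht : 0 < t)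
    (ht' : t < (d:ℝ)/((d:ℝ)-1)) (θ : ℝ) (hθ : ((d:ℝ)-1)*t/(d:ℝ) ≤ θ) (hθ1 : θ ≤ 1) :
    upperIntDim d θ (Fset t d) ≤ (d:ℝ)^2*θ/((d:ℝ)*θ+t) := by
  have hd0 : (2 : ℝ) ≤ d := by exact_mod_cast hd
  have hθ0 : 0 < θ := lt_of_lt_of_le (div_pos (mul_pos (by linarith) ht) (by linarith)) hθ
  rw [upperIntDim, if_neg hθ0.ne']
  refine le_of_forall_pos_le_add fun η hη => csInf_le ⟨0, fun s hs => hs.1⟩ ⟨by positivity, ?_⟩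
  intro ε hε
  set s : ℝ := (d:ℝ)^2*θ/((d:ℝ)*θ+t) + η with hs
  set a : ℝ := d / (d * θ + t) with ha
  have ha0 : 0 < a := by positivity
  have hat : a * t ≤ 1 := by
    rw [ha, div_mul_eq_mul_div, div_le_one (by positivity)]
    rw [div_le_iff₀ (by linarith)] at hθ
    linarith
  have e1 : s / θ - a * d = η / θ := by rw [hs, ha]; field_simp; ring
  have e2 : s - d + a * t = η := by rw [hs, ha]; field_simp; ring
  set C : ℝ := 2 ^ d + (4 * d) ^ d with hC
  have hC0 : 0 < C := by positivity
  refine ⟨min 1 ((ε / C) ^ (1 / η)), by positivity, min_le_left _ _, fun δ hδ hδ' => ?_⟩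
  have hδ1 : δ < 1 := hδ'.trans_le (min_le_left _ _)
  have hδη : δ ^ η ≤ ε / C := by
    calc δ ^ η ≤ ((ε / C) ^ (1 / η)) ^ η := by
          gcongr
          exact hδ'.le.trans (min_le_right _ _)
      _ = ε / C := by
          rw [← Real.rpow_mul (by positivity), one_div_mul_cancel hη.ne', Real.rpow_one]
  have hQt : (δ ^ (-a)) ^ (-t) = δ ^ (a * t) := by
    rw [← Real.rpow_mul hδ.le]; ring_nf
  obtain ⟨m, U, hU, hdiam, hsum⟩ := exists_cover d hd ht (s := s)
    (Real.one_le_rpow_of_pos_of_le_one_of_nonpos hδ hδ1.le (neg_nonpos.2 ha0.le))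
    (Real.rpow_pos_of_pos hδ (1 / θ))
    (by simpa using Real.rpow_le_rpow_of_exponent_ge hδ hδ1.le ((one_le_div hθ0).2 hθ1))
    hδ1.le
    (by rw [hQt]; simpa using Real.rpow_le_rpow_of_exponent_ge hδ hδ1.le hat)
  refine ⟨m, U, hU, hdiam, hsum.trans ?_⟩
  have c1 : (2 * δ ^ (-a)) ^ d * (δ ^ (1 / θ)) ^ s = 2 ^ d * δ ^ (η / θ) := by
    rw [mul_pow, ← Real.rpow_natCast (δ ^ (-a)), ← Real.rpow_mul hδ.le, ← Real.rpow_mul hδ.le,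
      mul_assoc, ← Real.rpow_add hδ, ← e1]
    ring_nf
  have c2 : (4 * d / δ) ^ d * (δ ^ (-a)) ^ (-t) * δ ^ s = (4 * d) ^ d * δ ^ η := by
    rw [hQt, div_pow, div_eq_mul_inv, ← Real.rpow_natCast δ, ← Real.rpow_neg hδ.le, mul_assoc,
      mul_assoc, ← Real.rpow_add hδ, ← Real.rpow_add hδ, ← e2]
    ring_nf
  have c3 : δ ^ (η / θ) ≤ δ ^ η :=
    Real.rpow_le_rpow_of_exponent_ge hδ hδ1.le (le_div_self hη.le hθ0 hθ1)
  calc _ ≤ 2 ^ d * δ ^ η + (4 * d) ^ d * δ ^ η := by rw [c1, c2]; gcongr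
    _ = C * δ ^ η := by rw [hC]; ring
    _ ≤ C * (ε / C) := by gcongr
    _ = ε := by field_simp
end

section
/- Let d ≥ 2 be an integer and t ≥ d/(d−1). There exists a constant C > 0 depending only on d and t such that for all x ∈ F_{t,d} and all 0 < r < R < 1, N_r( B(x,R) ∩ F_{t,d} ) ≤ C (R/r)^{d−1}. In particular, the Assouad dimension of F_{t,d} is at most d−1. -/
/-!
Write `d = n + 1` and cut `B(x, R) ∩ F` at height `r`. The part of height at most `r` lies in a slab
of thickness `r` and needs `O((R / r) ^ n)` cubes.

A point of height greater than `r` is `(p / q, q ^ (-t))` for an integer vector `(p, q)` with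
`1 ≤ q ≤ Q = r ^ (-1 / t)` and `p / q` in a cube of half side `R`, so that `(p, q)` lies in a cone of
volume of order `R ^ n * Q ^ (n + 1)`. Any `n + 1` such vectors have determinant at most
`(n + 1)! * R ^ n * Q ^ (n + 1)` (`abs_det_cone_le`). There are two cases (`lattice_dichotomy`).

* The vectors span. Choose `n + 1` of them with maximal determinant `D ≠ 0`. By Cramer's rule all the
  others have coordinates in `[-1, 1]` relative to these, and since the sublattice spanned has
  index `|D|`, there are at most `3 ^ (n + 1) * |D|` vectors. As `t ≥ (n + 1) / n` and `r < 1`,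
  `Q ^ (n + 1) ≤ r ^ (-n)`, so there are `O((R / r) ^ n)` points.
* The vectors lie in a hyperplane through the origin. Then all points `p / q` lie in an affine
  hyperplane of `ℝ ^ n`, and the points `(p / q, q ^ (-t))` in a vertical hyperplane of `ℝ ^ (n + 1)`,
  whose intersection with a cube of half side `R` needs `O((R / r) ^ n)` cubes.

Nothing here needs `R < 1`, so `n` is an admissible exponent in the definition of the Assouad
dimension.
-/

open Set MeasureTheory Filter

/-! ### Integer points in a cone -/

/-- If the columns of `M` have maximal determinant among tuples from `P`, then by Cramer's rule each
point of `P` has coordinates in `[-1, 1]` relative to these columns. Such a point is determined by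
its class modulo the sublattice they span, which has index `|det M|`, and by the floors of its
coordinates. -/
theorem exists_encoding_of_det_ne_zero {m : ℕ} (P : Set (Fin m → ℤ))
    (M : Matrix (Fin m) (Fin m) ℤ) (hM : M.det ≠ 0)
    (hmax : ∀ i, ∀ v ∈ P, (M.updateCol i v).det.natAbs ≤ M.det.natAbs) :
    ∃ (κ : Type) (_ : Fintype κ) (g : (Fin m → ℤ) → κ),
      Fintype.card κ = 3 ^ m * M.det.natAbs ∧ InjOn g P := by
  classical
  set f : (Fin m → ℤ) →ₗ[ℤ] (Fin m → ℤ) := M.mulVecLin with hf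
  have hinj : Function.Injective f := by
    intro u w huw
    have h := congrArg (fun y => M.adjugate.mulVec y) huw
    simp only [hf, Matrix.mulVecLin_apply, Matrix.mulVec_mulVec, Matrix.adjugate_mul,
      Matrix.smul_mulVec, Matrix.one_mulVec] at h
    exact smul_right_injective _ hM h
  set N : Submodule ℤ (Fin m → ℤ) := LinearMap.range f with hN
  have hcard : Nat.card ((Fin m → ℤ) ⧸ N) = M.det.natAbs := by
    rw [← Submodule.natAbs_det_equiv N (LinearEquiv.ofInjective f hinj)]
    have : (N.subtype ∘ₗ AddMonoidHom.toIntLinearMap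
        ((LinearEquiv.ofInjective f hinj : (Fin m → ℤ) ≃ₗ[ℤ] N) : (Fin m → ℤ) →+ N)) = f := by
      ext; rfl
    rw [this, hf, ← Matrix.toLin'_apply', LinearMap.det_toLin']
  have hfin : Finite ((Fin m → ℤ) ⧸ N) :=
    Nat.finite_of_card_ne_zero (by rw [hcard]; simpa using hM)
  have := Fintype.ofFinite ((Fin m → ℤ) ⧸ N)
  -- By maximality the Cramer coordinates lie in `[-1, 1]`, so their floors take three values.
  have hfloor : ∀ v ∈ P, ∀ i, -1 ≤ M.cramer v i / M.det ∧ M.cramer v i / M.det < 2 := by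
    intro v hv i
    have h := hmax i v hv
    rw [← Matrix.cramer_apply] at h
    rcases lt_or_gt_of_ne hM with hd | hd
    · have : 0 < - M.det := by omega
      rw [← neg_neg M.det, Int.ediv_neg]
      constructor
      · have := Int.ediv_lt_iff_lt_mul (a := M.cramer v i) (b := 2) this
        rw [neg_le_neg_iff]
        have : M.cramer v i / -M.det < 2 := by rw [this]; omega
        omega
      · have := Int.le_ediv_iff_mul_le (a := -1) (b := M.cramer v i) this
        have : -1 ≤ M.cramer v i / -M.det := by rw [this]; omega
        omega
    · exact ⟨by rw [Int.le_ediv_iff_mul_le hd]; omega, by rw [Int.ediv_lt_iff_lt_mul hd]; omega⟩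
  refine ⟨((Fin m → ℤ) ⧸ N) × (Fin m → Fin 3), inferInstance,
    fun v => (Submodule.Quotient.mk v, fun i => Fin.ofNat 3 (M.cramer v i / M.det + 1).toNat), ?_, ?_⟩
  · rw [Fintype.card_prod, ← Nat.card_eq_fintype_card, hcard, mul_comm]
    simp
  · intro v hv w hw hvw
    simp only [Prod.mk.injEq] at hvw
    obtain ⟨h1, h2⟩ := hvw
    rw [Submodule.Quotient.eq] at h1
    obtain ⟨k, hk⟩ := h1
    have hk' : M.cramer v - M.cramer w = M.det • k := by
      rw [← map_sub, ← hk, hf, Matrix.mulVecLin_apply, Matrix.cramer_eq_adjugate_mulVec,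
        Matrix.mulVec_mulVec, Matrix.adjugate_mul, Matrix.smul_mulVec, Matrix.one_mulVec]
    have hk0 : k = 0 := by
      funext i
      have e := congrFun hk' i
      simp only [Pi.sub_apply, Pi.smul_apply, smul_eq_mul] at e
      have e2 := congrFun h2 i
      have hq : M.cramer v i / M.det = M.cramer w i / M.det := by
        have := hfloor v hv i
        have := hfloor w hw i
        have := congrArg Fin.val e2
        simp only [Fin.ofNat] at this
        omega
      have e3 : M.cramer v i = M.cramer w i + M.det * k i := by linarith
      rw [e3, Int.add_mul_ediv_left _ _ hM] at hq
      simpa using hq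
    rw [hk0, map_zero] at hk
    exact (sub_eq_zero.mp hk.symm)

/-- The degenerate case: a set without a nonsingular tuple lies in a hyperplane through `0`. -/
theorem exists_functional_of_det_eq_zero {m : ℕ} (P : Set (Fin m → ℤ))
    (h0 : ∀ M : Matrix (Fin m) (Fin m) ℤ, (∀ j, M.col j ∈ P) → M.det = 0) :
    ∃ a : Fin m → ℝ, a ≠ 0 ∧ ∀ v ∈ P, ∑ i, a i * (v i : ℝ) = 0 := by
  classical
  set e : (Fin m → ℤ) → (Fin m → ℝ) := fun v i => (v i : ℝ) with he
  by_cases hs : Submodule.span ℝ (e '' P) = ⊤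
  · exfalso
    have hr : Module.finrank ℝ (Submodule.span ℝ (e '' P)) = m := by
      rw [hs, finrank_top]; simp
    have hex := Submodule.exists_fun_fin_finrank_span_eq ℝ (e '' P)
    rw [hr] at hex
    obtain ⟨f, hf, -, hli⟩ := hex
    choose v hvP hv using hf
    set M : Matrix (Fin m) (Fin m) ℤ := Matrix.of fun i j => v j i with hM
    have hcols : (M.map (Int.cast : ℤ → ℝ)).col = f := by
      funext j
      rw [← hv j]
      rfl
    have hu : IsUnit (M.map (Int.cast : ℤ → ℝ)) := by
      rw [← Matrix.linearIndependent_cols_iff_isUnit, hcols]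
      exact hli
    rw [Matrix.isUnit_iff_isUnit_det, ← Int.cast_det, h0 M hvP] at hu
    simp at hu
  · obtain ⟨φ, hφ, hk⟩ := Submodule.exists_le_ker_of_lt_top _ (lt_top_iff_ne_top.mpr hs)
    refine ⟨fun i => φ (Pi.single i 1), ?_, ?_⟩
    · intro h
      apply hφ
      ext i
      simpa using congrFun h i
    · intro v hv
      have : φ (e v) = 0 := hk (Submodule.subset_span ⟨v, hv, rfl⟩)
      rw [LinearMap.pi_apply_eq_sum_univ φ (e v)] at this
      rw [← this]
      refine Finset.sum_congr rfl fun i _ => ?_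
      rw [smul_eq_mul, mul_comm]
      have hsingle : (Pi.single i 1 : Fin m → ℝ) = fun j => if i = j then 1 else 0 := by
        ext j
        simp [Pi.single_apply, eq_comm]
      simp only [hsingle, he]

/-- A set of integer vectors all of whose determinants are bounded by `B` either lies in a
hyperplane through `0` or has at most `3 ^ m * B` elements (the second alternative is stated through
an injection `g` into a finite type). -/
theorem lattice_dichotomy {m : ℕ} (P : Set (Fin m → ℤ)) (B : ℝ)
    (hB : ∀ M : Matrix (Fin m) (Fin m) ℤ, (∀ j, M.col j ∈ P) → |(M.det : ℝ)| ≤ B) :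
    (∃ a : Fin m → ℝ, a ≠ 0 ∧ ∀ v ∈ P, ∑ i, a i * (v i : ℝ) = 0) ∨
    ∃ (κ : Type) (_ : Fintype κ) (g : (Fin m → ℤ) → κ),
      (Fintype.card κ : ℝ) ≤ 3 ^ m * B ∧ InjOn g P := by
  classical
  by_cases h0 : ∀ M : Matrix (Fin m) (Fin m) ℤ, (∀ j, M.col j ∈ P) → M.det = 0
  · exact Or.inl (exists_functional_of_det_eq_zero P h0)
  right
  push Not at h0
  obtain ⟨M₀, hM₀, hd₀⟩ := h0
  -- A tuple of maximal determinant exists because the determinants are bounded integers.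
  set A : Set ℕ := {k | ∃ M : Matrix (Fin m) (Fin m) ℤ, (∀ j, M.col j ∈ P) ∧ M.det.natAbs = k}
  have hAb : BddAbove A := by
    refine ⟨⌊B⌋₊, ?_⟩
    rintro k ⟨M, hM, rfl⟩
    apply Nat.le_floor
    rw [Nat.cast_natAbs, Int.cast_abs]
    exact hB M hM
  have hmem : sSup A ∈ A := Nat.sSup_mem ⟨_, M₀, hM₀, rfl⟩ hAb
  obtain ⟨M, hM, hMs⟩ := hmem
  have hge : ∀ M' : Matrix (Fin m) (Fin m) ℤ, (∀ j, M'.col j ∈ P) →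
      M'.det.natAbs ≤ M.det.natAbs := fun M' h' => by
    rw [hMs]; exact le_csSup hAb ⟨M', h', rfl⟩
  have hne : M.det ≠ 0 := by
    have := hge M₀ hM₀
    intro h
    rw [h] at this
    apply hd₀
    simpa using this
  obtain ⟨κ, i1, g, hc, hg⟩ := exists_encoding_of_det_ne_zero P M hne (by
    intro i v hv
    apply hge
    intro j
    by_cases hj : j = i
    · subst hj
      convert hv using 1
      ext; simp [Matrix.col]
    · convert hM j using 1
      ext; simp [Matrix.col, hj])
  refine ⟨κ, i1, g, ?_, hg⟩
  rw [hc]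
  push_cast
  have := hB M hM
  rw [Nat.cast_natAbs, Int.cast_abs]
  gcongr

/-- Determinant bound for vectors `(p, q)` with `0 < q ≤ Q` and `p / q` within `R` of `x`, stated
without division. Subtracting `x i` times the last row from the `i`-th row makes the entries of
that row at most `R * Q`. -/
theorem abs_det_cone_le {n : ℕ} (x : Fin n → ℝ) (R Q : ℝ)
    (M : Matrix (Fin (n + 1)) (Fin (n + 1)) ℝ)
    (hlast : ∀ j, |M (Fin.last n) j| ≤ Q)
    (hM : ∀ j i, |M i.castSucc j - x i * M (Fin.last n) j| ≤ R * Q) :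
    |M.det| ≤ (n + 1).factorial * (Q ^ (n + 1) * R ^ n) := by
  classical
  set c : Fin (n + 1) → ℝ := Fin.snoc x 0 with hc
  set B : Matrix (Fin (n + 1)) (Fin (n + 1)) ℝ :=
    Matrix.of fun i j => M i j - c i * M (Fin.last n) j with hB
  have hdet : M.det = B.det := by
    refine Matrix.det_eq_of_forall_row_eq_smul_add_const c (Fin.last n) (by simp [hc]) ?_
    intro i j
    simp [hB, hc]
  set b : Fin (n + 1) → ℝ := Fin.snoc (fun _ => R * Q) Q with hb
  have hBb : ∀ i j, |B i j| ≤ b i := by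
    intro i j
    refine Fin.lastCases ?_ (fun i => ?_) i
    · simpa [hB, hb, hc] using hlast j
    · simpa [hB, hb, hc] using hM j i
  rw [hdet, Matrix.det_apply']
  refine (Finset.abs_sum_le_sum_abs _ _).trans ?_
  calc ∑ σ : Equiv.Perm (Fin (n + 1)), |((Equiv.Perm.sign σ : ℤ) : ℝ) * ∏ i, B (σ i) i|
      ≤ ∑ σ : Equiv.Perm (Fin (n + 1)), (Q ^ (n + 1) * R ^ n) := by
        refine Finset.sum_le_sum fun σ _ => ?_
        have hs : |((Equiv.Perm.sign σ : ℤ) : ℝ)| = 1 := by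
          rcases Int.units_eq_one_or (Equiv.Perm.sign σ) with h | h <;> simp [h]
        rw [abs_mul, hs, one_mul, Finset.abs_prod]
        calc ∏ i, |B (σ i) i| ≤ ∏ i, b (σ i) :=
              Finset.prod_le_prod (fun _ _ => abs_nonneg _) fun i _ => hBb _ _
          _ = ∏ i, b i := Equiv.prod_comp σ b
          _ = Q ^ (n + 1) * R ^ n := by
              rw [Fin.prod_univ_castSucc]
              simp [hb]
              ring
    _ = _ := by
        simp [Fintype.card_perm]

/-! ### Coverings by classes of small diameter -/

/-- `Cov r N S` says that `S` can be split into at most `N` classes, each of diameter at most `r`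
in the supremum metric. -/
def Cov {d : ℕ} (r N : ℝ) (S : Set (EuclideanSpace ℝ (Fin d))) : Prop :=
  ∃ (κ : Type) (_ : Fintype κ) (g : EuclideanSpace ℝ (Fin d) → κ), (Fintype.card κ : ℝ) ≤ N ∧
    ∀ z ∈ S, ∀ w ∈ S, g z = g w → ∀ j, |z j - w j| ≤ r

theorem Cov.mono {d : ℕ} {r N N' : ℝ} {S : Set (EuclideanSpace ℝ (Fin d))} (h : Cov r N S)
    (hN : N ≤ N') : Cov r N' S := by
  obtain ⟨κ, i, g, hc, hg⟩ := h
  exact ⟨κ, i, g, hc.trans hN, hg⟩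

theorem Cov.union {d : ℕ} {r N₁ N₂ : ℝ} {S T U : Set (EuclideanSpace ℝ (Fin d))}
    (hS : Cov r N₁ S) (hT : Cov r N₂ T) (hU : U ⊆ S ∪ T) : Cov r (N₁ + N₂) U := by
  classical
  obtain ⟨κ, i, g, hc, hg⟩ := hS
  obtain ⟨κ', i', g', hc', hg'⟩ := hT
  refine ⟨κ ⊕ κ', inferInstance, fun z => if z ∈ S then Sum.inl (g z) else Sum.inr (g' z), ?_, ?_⟩
  · rw [Fintype.card_sum]; push_cast; linarith
  · intro z hz w hw h
    by_cases h1 : z ∈ S <;> by_cases h2 : w ∈ S <;> simp only [h1, h2, if_true, if_false] at h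
    · exact hg z h1 w h2 (Sum.inl_injective h)
    · exact absurd h (by simp)
    · exact absurd h (by simp)
    · exact hg' z ((hU hz).resolve_left h1) w ((hU hw).resolve_left h2) (Sum.inr_injective h)

/-- A class of sup-diameter at most `r` lies in the cube whose lower corner has the infima of the
coordinates over the class as its coordinates. -/
theorem Cov.cubeCoverNum_le {d : ℕ} {r N : ℝ} {S : Set (EuclideanSpace ℝ (Fin d))}
    (h : Cov r N S) : (cubeCoverNum d r S : ℝ) ≤ N := by
  classical
  obtain ⟨κ, i, g, hc, hg⟩ := h
  refine le_trans (Nat.cast_le.mpr (Nat.sInf_le ?_)) hc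
  have e := (Fintype.equivFin κ)
  refine ⟨fun k j => sInf ((fun z : EuclideanSpace ℝ (Fin d) => z j) '' {z ∈ S | g z = e.symm k}), ?_⟩
  intro z hz
  refine mem_iUnion.mpr ⟨e (g z), fun j => ?_⟩
  simp only [e.symm_apply_apply]
  have hlow : ∀ y ∈ ((fun z : EuclideanSpace ℝ (Fin d) => z j) '' {w ∈ S | g w = g z}),
      z j - r ≤ y := by
    rintro y ⟨w, ⟨hw, hgw⟩, rfl⟩
    have := abs_le.mp (hg z hz w hw hgw.symm j)
    simp only
    linarith
  constructor
  · exact csInf_le ⟨_, hlow⟩ ⟨z, ⟨hz, rfl⟩, rfl⟩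
  · have hne : ((fun z : EuclideanSpace ℝ (Fin d) => z j) '' {w ∈ S | g w = g z}).Nonempty :=
      ⟨z j, z, ⟨hz, rfl⟩, rfl⟩
    have := le_csInf hne hlow
    linarith

/-- The interval of centre `c` and radius `R` splits into at most `2 * R / s + 1` pieces of length
at most `s`. -/
theorem exists_interval_encoding (c R s : ℝ) (hs : 0 < s) (hR : 0 ≤ R) :
    ∃ (k : ℕ) (h : ℝ → Fin (k + 1)), ((k : ℝ) + 1 ≤ 2 * R / s + 1) ∧
      ∀ u w, |u - c| ≤ R → |w - c| ≤ R → h u = h w → |u - w| ≤ s := by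
  refine ⟨⌊2 * R / s⌋₊, fun u => Fin.ofNat _ ⌊(u - (c - R)) / s⌋₊, ?_, ?_⟩
  · have := Nat.floor_le (a := 2 * R / s) (by positivity)
    linarith
  · intro u w hu hw h
    have key : ∀ u, |u - c| ≤ R → 0 ≤ (u - (c - R)) / s ∧
        ⌊(u - (c - R)) / s⌋₊ ≤ ⌊2 * R / s⌋₊ := by
      intro u hu
      have := abs_le.mp hu
      refine ⟨div_nonneg (by linarith) hs.le, Nat.floor_le_floor ?_⟩
      gcongr
      linarith
    obtain ⟨u0, u1⟩ := key u hu
    obtain ⟨w0, w1⟩ := key w hw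
    have h' := congrArg Fin.val h
    simp only [Fin.ofNat] at h'
    rw [Nat.mod_eq_of_lt (by omega), Nat.mod_eq_of_lt (by omega)] at h'
    have a1 := Nat.floor_le u0
    have a2 := Nat.lt_floor_add_one ((u - (c - R)) / s)
    have a3 := Nat.floor_le w0
    have a4 := Nat.lt_floor_add_one ((w - (c - R)) / s)
    rw [h'] at a1 a2
    have : |(u - (c - R)) / s - (w - (c - R)) / s| ≤ 1 := by
      rw [abs_le]; constructor <;> linarith
    rw [← sub_div, abs_div, abs_of_pos hs, div_le_one hs] at this
    simpa using this

/-- A subset of a cube of half side `R` on which the coordinate `j₀` is controlled by the others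
needs only `(R / r) ^ n` cubes up to a constant, as in dimension `n`: take a grid of mesh
`r / (n + 1)` in the coordinates other than `j₀`. -/
theorem cov_of_slaved {n : ℕ} (x : EuclideanSpace ℝ (Fin (n + 1))) {r R : ℝ} (hr : 0 < r)
    (hrR : r < R) (S : Set (EuclideanSpace ℝ (Fin (n + 1)))) (hS : ∀ z ∈ S, ∀ j, |z j - x j| ≤ R)
    (j₀ : Fin (n + 1))
    (hj₀ : ∀ z ∈ S, ∀ w ∈ S, (∀ j ≠ j₀, |z j - w j| ≤ r / (n + 1)) → |z j₀ - w j₀| ≤ r) :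
    Cov r ((3 * (n + 1) * (R / r)) ^ n) S := by
  have hs : 0 < r / (n + 1) := by positivity
  have hR : 0 < R := hr.trans hrR
  choose k h hk hh using fun j =>
    exists_interval_encoding (x (j₀.succAbove j)) R (r / (n + 1)) hs hR.le
  refine ⟨(j : Fin n) → Fin (k j + 1), inferInstance, fun z j => h j (z (j₀.succAbove j)), ?_, ?_⟩
  · rw [Fintype.card_pi]
    simp only [Fintype.card_fin]
    push_cast
    have hb : ∀ j ∈ (Finset.univ : Finset (Fin n)), (k j : ℝ) + 1 ≤ 3 * (n + 1) * (R / r) := by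
      intro j _
      refine (hk j).trans ?_
      have h1 : 1 ≤ R / r := by rw [le_div_iff₀ hr]; linarith
      have h2 : 2 * R / (r / (n + 1)) = 2 * ((n + 1) * (R / r)) := by field_simp
      rw [h2]
      have : (0:ℝ) ≤ n := Nat.cast_nonneg n
      nlinarith
    refine (Finset.prod_le_prod (fun j _ => by positivity) hb).trans ?_
    simp
  · intro z hz w hw hzw
    have hoff : ∀ j ≠ j₀, |z j - w j| ≤ r / (n + 1) := by
      intro j hj
      obtain ⟨i, rfl⟩ := Fin.exists_succAbove_eq hj
      exact hh i _ _ (hS z hz _) (hS w hw _) (congrFun hzw i)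
    intro j
    by_cases hj : j = j₀
    · subst hj
      exact hj₀ z hz w hw hoff
    · refine (hoff j hj).trans (div_le_self hr.le ?_)
      have : (0:ℝ) ≤ n := Nat.cast_nonneg n
      linarith

/-! ### The covering estimate -/

/-- On a hyperplane the coordinate with the largest coefficient is controlled by the others. -/
theorem abs_sub_le_of_hyperplane {n : ℕ} (a : Fin n → ℝ) (b : ℝ) (i₀ : Fin n) (hne : a i₀ ≠ 0)
    (hmax : ∀ i, |a i| ≤ |a i₀|) {r : ℝ} (hr : 0 < r) (u w : Fin n → ℝ)
    (hu : ∑ i, a i * u i = b) (hw : ∑ i, a i * w i = b)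
    (h : ∀ i ≠ i₀, |u i - w i| ≤ r / (n + 1)) : |u i₀ - w i₀| ≤ r := by
  classical
  have h0 : ∑ i, a i * (u i - w i) = 0 := by
    simp only [mul_sub, Finset.sum_sub_distrib, hu, hw, sub_self]
  rw [← Finset.add_sum_erase _ _ (Finset.mem_univ i₀)] at h0
  have h1 : |a i₀| * |u i₀ - w i₀| ≤ |a i₀| * r := by
    rw [← abs_mul, eq_neg_of_add_eq_zero_left h0, abs_neg]
    calc |∑ i ∈ Finset.univ.erase i₀, a i * (u i - w i)|
        ≤ ∑ i ∈ Finset.univ.erase i₀, |a i * (u i - w i)| := Finset.abs_sum_le_sum_abs _ _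
      _ ≤ ∑ i ∈ Finset.univ.erase i₀, |a i₀| * (r / (n + 1)) := by
          refine Finset.sum_le_sum fun i hi => ?_
          rw [abs_mul]
          exact mul_le_mul (hmax i) (h i (Finset.ne_of_mem_erase hi)) (abs_nonneg _) (abs_nonneg _)
      _ ≤ ∑ i : Fin n, |a i₀| * (r / (n + 1)) :=
          Finset.sum_le_sum_of_subset_of_nonneg (Finset.erase_subset _ _)
            fun _ _ _ => by positivity
      _ = |a i₀| * (n / (n + 1) * r) := by simp; ring
      _ ≤ |a i₀| * r := by
          have : (n : ℝ) / (n + 1) ≤ 1 := by rw [div_le_one (by positivity)]; linarith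
          gcongr
          exact mul_le_of_le_one_left hr.le this
  exact le_of_mul_le_mul_left h1 (abs_pos.mpr hne)

/-- The points of `Fset t (n + 1)` of height greater than `r` in the cube of centre `x` and half
side `R`, each written as `(v / v_last, v_last ^ (-t))` for an integer vector `v`. -/
def highPart (t : ℝ) (n : ℕ) (x : EuclideanSpace ℝ (Fin (n + 1))) (r R : ℝ) :
    Set (EuclideanSpace ℝ (Fin (n + 1))) :=
  {z | (∀ j, |z j - x j| ≤ R) ∧ r < z (Fin.last n) ∧ ∃ v : Fin (n + 1) → ℤ, 1 ≤ v (Fin.last n) ∧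
    (∀ i : Fin n, z i.castSucc = (v i.castSucc : ℝ) / v (Fin.last n)) ∧
    z (Fin.last n) = (v (Fin.last n) : ℝ) ^ (-t)}

/-- The high points satisfy the covering bound: their integer vectors either lie in a hyperplane
through `0`, so that the points lie in a vertical hyperplane, or are few in number. -/
theorem cov_highPart {n : ℕ} (hn : 1 ≤ n) {t : ℝ} (ht : ((n : ℝ) + 1) / n ≤ t)
    (x : EuclideanSpace ℝ (Fin (n + 1))) {r R : ℝ} (hr : 0 < r) (hrR : r < R) :
    Cov r (((3 * (n + 1)) ^ n + 3 ^ (n + 1) * (n + 1).factorial) * (R / r) ^ n)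
      (highPart t n x r R) := by
  classical
  have hR : 0 < R := hr.trans hrR
  have hn0 : (0 : ℝ) < n := by exact_mod_cast hn
  have ht0 : 0 < t := lt_of_lt_of_le (by positivity) ht
  rcases (highPart t n x r R).eq_empty_or_nonempty with hemp | ⟨z₀, hz₀⟩
  · rw [hemp]
    have h1 : 1 ≤ R / r := by rw [le_div_iff₀ hr]; linarith
    refine ⟨Unit, inferInstance, fun _ => (), ?_, by simp⟩
    have h2 : (1 : ℝ) ≤ (3 * (n + 1)) ^ n := one_le_pow₀ (by linarith)
    have h3 : (0 : ℝ) ≤ 3 ^ (n + 1) * (n + 1).factorial := by positivity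
    have h4 : (1 : ℝ) ≤ (R / r) ^ n := one_le_pow₀ h1
    simp only [Fintype.card_unit, Nat.cast_one]
    nlinarith
  have hht : ∀ q : ℤ, 1 ≤ q → r < (q : ℝ) ^ (-t) → r < 1 ∧ (q : ℝ) ≤ r ^ (-(1 / t)) := by
    intro q hq hrq
    have hq1 : (1 : ℝ) ≤ q := by exact_mod_cast hq
    refine ⟨hrq.trans_le (Real.rpow_le_one_of_one_le_of_nonpos hq1 (by linarith)), ?_⟩
    calc (q : ℝ) = ((q : ℝ) ^ (-t)) ^ (-(1 / t)) := by
          rw [← Real.rpow_mul (by linarith)]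
          have : -t * -(1 / t) = 1 := by field_simp
          rw [this, Real.rpow_one]
      _ ≤ r ^ (-(1 / t)) :=
          Real.rpow_le_rpow_of_nonpos hr hrq.le (neg_nonpos.mpr (by positivity))
  have hr1 : r < 1 := by
    obtain ⟨-, h, v, hv, -, hl⟩ := hz₀
    exact (hht _ hv (hl ▸ h)).1
  set Q : ℝ := r ^ (-(1 / t)) with hQ
  have hQ0 : 0 < Q := Real.rpow_pos_of_pos hr _
  -- This is where `t ≥ (n + 1) / n` enters.
  have hQpow : Q ^ (n + 1) ≤ (1 / r) ^ n := by
    rw [hQ, ← Real.rpow_mul_natCast hr.le, one_div r, inv_pow, ← Real.rpow_natCast r n,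
      ← Real.rpow_neg hr.le]
    apply Real.rpow_le_rpow_of_exponent_ge hr hr1.le
    have : ((n : ℝ) + 1) / t ≤ n := by
      rw [div_le_iff₀ ht0]
      rw [div_le_iff₀ hn0] at ht
      linarith
    push_cast
    have e : -(1 / t) * ((n : ℝ) + 1) = -((n + 1) / t) := by ring
    rw [e]
    linarith
  set P : Set (Fin (n + 1) → ℤ) := {v | 1 ≤ v (Fin.last n) ∧ (v (Fin.last n) : ℝ) ≤ Q ∧
    ∀ i : Fin n, |(v i.castSucc : ℝ) / v (Fin.last n) - x i.castSucc| ≤ R} with hP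
  have hrep : ∀ z ∈ highPart t n x r R, ∃ v ∈ P,
      (∀ i : Fin n, z i.castSucc = (v i.castSucc : ℝ) / v (Fin.last n)) ∧
      z (Fin.last n) = (v (Fin.last n) : ℝ) ^ (-t) := by
    rintro z ⟨hzx, hzr, v, hv1, hvz, hvl⟩
    exact ⟨v, ⟨hv1, (hht _ hv1 (hvl ▸ hzr)).2, fun i => hvz i ▸ hzx i.castSucc⟩, hvz, hvl⟩
  have hdet : ∀ M : Matrix (Fin (n + 1)) (Fin (n + 1)) ℤ, (∀ j, M.col j ∈ P) →
      |(M.det : ℝ)| ≤ (n + 1).factorial * (Q ^ (n + 1) * R ^ n) := by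
    intro M hM
    rw [Int.cast_det]
    refine abs_det_cone_le (fun i => x i.castSucc) R Q _ ?_ ?_
    · intro j
      obtain ⟨h1, h2, -⟩ := hM j
      have h1' : (1 : ℝ) ≤ M (Fin.last n) j := by exact_mod_cast h1
      rw [Matrix.map_apply, abs_of_pos (by linarith)]
      exact h2
    · intro j i
      obtain ⟨h1, h2, h3⟩ := hM j
      have h1' : (1 : ℝ) ≤ M (Fin.last n) j := by exact_mod_cast h1
      have h3' := h3 i
      simp only [Matrix.col_apply] at h2 h3'
      have e : (M i.castSucc j : ℝ) - x i.castSucc * M (Fin.last n) j =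
          ((M i.castSucc j : ℝ) / M (Fin.last n) j - x i.castSucc) * M (Fin.last n) j := by
        field_simp
      simp only [Matrix.map_apply]
      rw [e, abs_mul, abs_of_pos (by linarith : (0 : ℝ) < M (Fin.last n) j)]
      exact mul_le_mul h3' h2 (by linarith) hR.le
  rcases lattice_dichotomy P _ hdet with ⟨a, ha, haP⟩ | ⟨κ, iκ, g, hc, hg⟩
  · have : Nonempty (Fin n) := ⟨⟨0, hn⟩⟩
    obtain ⟨i₀, hi₀⟩ := Finite.exists_max (fun i : Fin n => |a i.castSucc|)
    have hplane : ∀ z ∈ highPart t n x r R,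
        ∑ i : Fin n, a i.castSucc * z i.castSucc = - a (Fin.last n) := by
      intro z hz
      obtain ⟨v, hvP, hvz, -⟩ := hrep z hz
      have h1 : (1 : ℝ) ≤ v (Fin.last n) := by exact_mod_cast hvP.1
      have h2 := haP v hvP
      rw [Fin.sum_univ_castSucc] at h2
      have h3 : (∑ i : Fin n, a i.castSucc * z i.castSucc) * v (Fin.last n)
          = ∑ i : Fin n, a i.castSucc * v i.castSucc := by
        rw [Finset.sum_mul]
        refine Finset.sum_congr rfl fun i _ => ?_
        rw [hvz i]
        field_simp
      have h4 : ((∑ i : Fin n, a i.castSucc * z i.castSucc) + a (Fin.last n))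
          * v (Fin.last n) = 0 := by rw [add_mul, h3, h2]
      rcases mul_eq_zero.mp h4 with h | h
      · linarith
      · linarith
    have hne : a i₀.castSucc ≠ 0 := by
      intro h0
      have hall : ∀ i : Fin n, a i.castSucc = 0 := fun i => by
        have := hi₀ i
        simp only [h0, abs_zero] at this
        exact abs_nonpos_iff.mp this
      apply ha
      have h1 := hplane z₀ hz₀
      simp only [hall, zero_mul, Finset.sum_const_zero] at h1
      ext j
      refine Fin.lastCases ?_ (fun i => ?_) j
      · simpa using h1.symm
      · simpa using hall i
    refine (cov_of_slaved x hr hrR _ (fun z hz => hz.1) i₀.castSucc ?_).mono ?_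
    · intro z hz w hw hzw
      refine abs_sub_le_of_hyperplane (fun i => a i.castSucc) _ i₀ hne hi₀ hr
        (fun i => z i.castSucc) (fun i => w i.castSucc) (hplane z hz) (hplane w hw) ?_
      intro i hi
      exact hzw _ (fun h => hi (Fin.castSucc_injective n h))
    · rw [mul_pow]
      gcongr
      have : (0 : ℝ) ≤ 3 ^ (n + 1) * (n + 1).factorial := by positivity
      linarith
  · choose! v hvP hvz hvl using hrep
    refine ⟨κ, iκ, fun z => g (v z), hc.trans ?_, ?_⟩
    · calc (3 : ℝ) ^ (n + 1) * ((n + 1).factorial * (Q ^ (n + 1) * R ^ n))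
          ≤ 3 ^ (n + 1) * ((n + 1).factorial * ((1 / r) ^ n * R ^ n)) := by gcongr
        _ = 3 ^ (n + 1) * (n + 1).factorial * (R / r) ^ n := by
            rw [← mul_pow, one_div_mul_eq_div]; ring
        _ ≤ _ := by
            gcongr
            have : (0 : ℝ) ≤ (3 * (n + 1)) ^ n := by positivity
            linarith
    · intro z hz w hw hzw j
      have e := hg (hvP z hz) (hvP w hw) hzw
      have : z j = w j := by
        refine Fin.lastCases ?_ (fun i => ?_) j
        · rw [hvl z hz, hvl w hw, e]
        · rw [hvz z hz, hvz w hw, e]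
      rw [this, sub_self, abs_zero]
      exact hr.le

/-- The covering estimate, valid without the restriction `R < 1`. -/
theorem cubeCoverNum_Fset_le {n : ℕ} (hn : 1 ≤ n) {t : ℝ} (ht : ((n : ℝ) + 1) / n ≤ t)
    (x : EuclideanSpace ℝ (Fin (n + 1))) {r R : ℝ} (hr : 0 < r) (hrR : r < R) :
    (cubeCoverNum (n + 1) r (Metric.closedBall x R ∩ Fset t (n + 1)) : ℝ) ≤
      (2 * (3 * (n + 1)) ^ n + 3 ^ (n + 1) * (n + 1).factorial) * (R / r) ^ n := by
  have hlow := cov_of_slaved x hr hrR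
    {z | (∀ j, |z j - x j| ≤ R) ∧ 0 ≤ z (Fin.last n) ∧ z (Fin.last n) ≤ r} (fun z hz => hz.1)
    (Fin.last n) (by
      rintro z ⟨-, hz⟩ w ⟨-, hw⟩ -
      rw [abs_le]
      constructor <;> linarith)
  refine ((hlow.union (cov_highPart hn ht x hr hrR) ?_).mono ?_).cubeCoverNum_le
  · rintro z ⟨hzx, hzF⟩
    have hcoord : ∀ j, |z j - x j| ≤ R := fun j => by
      rw [Metric.mem_closedBall, dist_eq_norm] at hzx
      exact (PiLp.norm_apply_le (z - x) j).trans hzx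
    rcases hzF with ⟨q, p, hp, hpz, hl⟩ | ⟨-, hl⟩
    · have hl' : z (Fin.last n) = (q : ℝ) ^ (-t) := hl (Fin.last n) rfl
      by_cases hzr : z (Fin.last n) ≤ r
      · exact Or.inl ⟨hcoord, hl' ▸ by positivity, hzr⟩
      · have h0 := hp ⟨0, hn⟩
        refine Or.inr ⟨hcoord, not_le.mp hzr, Fin.snoc (fun i => (p i : ℤ)) (q : ℤ), ?_, ?_, ?_⟩
        · simp only [Fin.snoc_last]
          omega
        · intro i
          simp only [Fin.snoc_last, Fin.snoc_castSucc, Int.cast_natCast]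
          exact hpz i
        · simpa using hl'
    · have hl' : z (Fin.last n) = 0 := hl (Fin.last n) rfl
      exact Or.inl ⟨hcoord, hl'.ge, hl'.le.trans hr.le⟩
  · rw [mul_pow (3 * ((n : ℝ) + 1)) (R / r) n]
    exact le_of_eq (by ring)

/-- for `t ≥ d/(d-1)` the Assouad dimension of `F_{t,d}` is at most `d-1`,
with the explicit covering estimate. -/
theorem assouad_dimension_upper_bound (d : ℕ) (hd : 2 ≤ d) (t : ℝ)
    (ht : (d:ℝ)/((d:ℝ)-1) ≤ t) :
    (∃ C : ℝ, 0 < C ∧ ∀ x ∈ Fset t d, ∀ r R : ℝ, 0 < r → r < R → R < 1 →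
      (cubeCoverNum d r (Metric.closedBall x R ∩ Fset t d) : ℝ) ≤ C * (R/r)^(d-1)) ∧
    assouadDim d (Fset t d) ≤ (d:ℝ) - 1 := by
  obtain ⟨n, rfl⟩ : ∃ n, d = n + 1 := ⟨d - 1, by omega⟩
  have hn : 1 ≤ n := by omega
  have hcast : ((n + 1 : ℕ) : ℝ) - 1 = n := by push_cast; ring
  rw [hcast] at ht ⊢
  push_cast at ht
  have hC : (0 : ℝ) < 2 * (3 * (n + 1)) ^ n + 3 ^ (n + 1) * (n + 1).factorial := by positivity
  refine ⟨⟨_, hC, fun x _ r R hr hrR _ => cubeCoverNum_Fset_le hn ht x hr hrR⟩, ?_⟩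
  unfold assouadDim
  set A : Set ℝ := {α : ℝ | ∃ C : ℝ, 0 < C ∧ ∀ x ∈ Fset t (n + 1), ∀ r R : ℝ, 0 < r → r < R →
    (cubeCoverNum (n + 1) r (Metric.closedBall x R ∩ Fset t (n + 1)) : ℝ) ≤ C * (R / r) ^ α}
  have hmem : (n : ℝ) ∈ A := by
    refine ⟨_, hC, fun x _ r R hr hrR => ?_⟩
    rw [Real.rpow_natCast]
    exact cubeCoverNum_Fset_le hn ht x hr hrR
  by_cases hb : BddBelow A
  · exact csInf_le hb hmem
  -- The infimum of a set that is not bounded below is `0` by convention.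
  · rw [Real.sInf_of_not_bddBelow hb]
    positivity
end

section
/- Let d ≥ 2 be an integer and 0 < t₁ < t₂ ≤ d/(d−1). Then G_{t₁,d} and G_{t₂,d} are not bi-Lipschitz equivalent; that is, there is no bijection f : G_{t₂,d} → G_{t₁,d} for which there exist constants 0 < c₁ ≤ c₂ with c₁‖x − y‖ ≤ ‖f(x) − f(y)‖ ≤ c₂‖x − y‖ for all x, y ∈ G_{t₂,d}. -/
/-!
The proof compares the two graphs through their isolated points, so no dimension theory is needed.

Call the last coordinate of a point of `G_{t,d}` its height. Only finitely many points have height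
`≥ h` for a given `h > 0`, so every point of positive height is isolated
(`not_accum_of_pos`). Points of the cube with an irrational coordinate are dense and have height
`0`; hence every point of height `0` is an accumulation point of the graph, and every point of
height `h > 0` lies within `2h` of a point of height `0` (`exists_irrational_near`).

A bi-Lipschitz bijection `f : G_{t₂,d} → G_{t₁,d}` sends accumulation points to accumulation
points, hence height `0` to height `0`, and the Lipschitz bound then gives
`height (f w) ≤ 2 c₂ · height w` for all `w` (`height_image_le`).

Let `X_Q` be the finite set of admissible rational points with denominator at most `Q`. The points
of `G_{t₁,d}` over `X_{Q+1}` have height `≥ (Q+1)^{-t₁}`, so their preimages have height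
`≥ (Q+1)^{-t₁} / (2 c₂)`. For large `Q` this exceeds `(Q+1)^{-t₂}`, because `t₁ < t₂`, and so the
preimages lie over `X_Q`. Thus `f⁻¹` induces an injection of `X_{Q+1}` into its proper subset
`X_Q`, which is absurd.
-/

open Set MeasureTheory Filter

/-! ### Rational points and values of the popcorn function -/

/-- `x` is the point `p / q`, with every `p i` in `[1, q)` and coprime to `q`. -/
def IsRep (d q : ℕ) (x : Fin (d-1) → ℝ) : Prop :=
  ∃ p : Fin (d-1) → ℕ,
    (∀ i, 1 ≤ p i ∧ p i < q ∧ Nat.Coprime (p i) q) ∧ (∀ i, x i = (p i : ℝ) / (q : ℝ))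

/-- The point of `ℝ^d` with first coordinates `x` and last coordinate `h`. -/
noncomputable def mkPt (d : ℕ) (x : Fin (d-1) → ℝ) (h : ℝ) : EuclideanSpace ℝ (Fin d) :=
  WithLp.toLp 2 (fun j => if hj : (j : ℕ) < d - 1 then x ⟨j, hj⟩ else h)

/-- The point of the graph `G_{t,d}` over `x`. -/
noncomputable def graphPt (t : ℝ) (d : ℕ) (x : Fin (d-1) → ℝ) : EuclideanSpace ℝ (Fin d) :=
  mkPt d x (popcornFun t d x)

/-- The set of admissible rational points of denominator at most `Q`. -/
def denLe (d Q : ℕ) : Set (Fin (d-1) → ℝ) := {x | ∃ q, q ≤ Q ∧ IsRep d q x}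

/-- `w` is an accumulation point of `S`. -/
def Accum {d : ℕ} (S : Set (EuclideanSpace ℝ (Fin d))) (w : EuclideanSpace ℝ (Fin d)) : Prop :=
  ∀ ε : ℝ, 0 < ε → ∃ v ∈ S, v ≠ w ∧ ‖v - w‖ < ε

/-- The denominator is determined by the point, since fractions in lowest terms are unique. -/
lemma isRep_unique {d : ℕ} (hd : 2 ≤ d) {q q' : ℕ} {x : Fin (d-1) → ℝ}
    (h : IsRep d q x) (h' : IsRep d q' x) : q = q' := by
  obtain ⟨p, hp, hx⟩ := h
  obtain ⟨p', hp', hx'⟩ := h'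
  let i : Fin (d-1) := ⟨0, by omega⟩
  obtain ⟨h1, h2, h3⟩ := hp i
  obtain ⟨h1', h2', h3'⟩ := hp' i
  have e : (p i : ℝ) / q = p' i / q' := by rw [← hx, ← hx']
  have hq : (q : ℝ) ≠ 0 := by norm_cast; omega
  have hq' : (q' : ℝ) ≠ 0 := by norm_cast; omega
  rw [div_eq_div_iff hq hq'] at e
  have e' : p i * q' = p' i * q := by exact_mod_cast e
  apply Nat.dvd_antisymm
  · exact h3.symm.dvd_of_dvd_mul_left (e' ▸ Dvd.intro_left _ rfl)
  · exact h3'.symm.dvd_of_dvd_mul_left (e' ▸ Dvd.intro_left _ rfl)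

lemma popcornFun_of_isRep {d : ℕ} (hd : 2 ≤ d) (t : ℝ) {q : ℕ} {x : Fin (d-1) → ℝ}
    (h : IsRep d q x) : popcornFun t d x = (q : ℝ) ^ (-t) := by
  have hex : ∃ q : ℕ, IsRep d q x := ⟨q, h⟩
  have hex' := hex
  unfold IsRep at hex'
  unfold popcornFun
  rw [dif_pos hex']
  rw [isRep_unique hd h hex'.choose_spec]

lemma popcornFun_of_not {d : ℕ} (t : ℝ) {x : Fin (d-1) → ℝ}
    (h : ¬ ∃ q, IsRep d q x) : popcornFun t d x = 0 := by
  unfold IsRep at h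
  unfold popcornFun
  rw [dif_neg h]

lemma popcornFun_nonneg {d : ℕ} (hd : 2 ≤ d) (t : ℝ) (x : Fin (d-1) → ℝ) :
    0 ≤ popcornFun t d x := by
  by_cases h : ∃ q, IsRep d q x
  · obtain ⟨q, h⟩ := h
    rw [popcornFun_of_isRep hd t h]; positivity
  · rw [popcornFun_of_not t h]

lemma popcornFun_of_irrational {d : ℕ} (t : ℝ) {x : Fin (d-1) → ℝ} {i : Fin (d-1)}
    (h : Irrational (x i)) : popcornFun t d x = 0 := by
  apply popcornFun_of_not
  rintro ⟨q, p, -, hx⟩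
  apply h
  exact ⟨(p i : ℚ) / q, by rw [hx]; push_cast; rfl⟩

lemma isRep_mem_cube {d q : ℕ} {x : Fin (d-1) → ℝ} (h : IsRep d q x) (i : Fin (d-1)) :
    x i ∈ Set.Icc (0:ℝ) 1 := by
  obtain ⟨p, hp, hx⟩ := h
  rw [hx]
  have : (p i : ℝ) ≤ q := by exact_mod_cast (hp i).2.1.le
  exact ⟨by positivity, div_le_one_of_le₀ this (by positivity)⟩

lemma denLe_finite (d Q : ℕ) : (denLe d Q).Finite := by
  refine Set.Finite.subset (s := ⋃ q ∈ Set.Iic Q,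
    (fun (p : Fin (d-1) → ℕ) i => (p i : ℝ) / (q : ℝ)) '' (Set.Iic (fun _ => Q))) ?_ ?_
  · exact (Set.finite_Iic Q).biUnion fun q _ => (Set.finite_Iic _).image _
  · rintro x ⟨q, hq, p, hp, hx⟩
    simp only [Set.mem_iUnion]
    exact ⟨q, hq, p, fun i => (hp i).2.1.le.trans hq, (funext hx).symm⟩

lemma popcornFun_ge_of_mem {d : ℕ} (hd : 2 ≤ d) {t : ℝ} (ht : 0 < t) {Q : ℕ}
    {x : Fin (d-1) → ℝ} (h : x ∈ denLe d Q) : (Q : ℝ) ^ (-t) ≤ popcornFun t d x := by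
  obtain ⟨q, hq, h⟩ := h
  rw [popcornFun_of_isRep hd t h]
  obtain ⟨p, hp, -⟩ := h
  have := (hp ⟨0, by omega⟩)
  have hq0 : 0 < q := by omega
  exact Real.rpow_le_rpow_of_nonpos (by exact_mod_cast hq0) (by exact_mod_cast hq) (by linarith)

lemma popcornFun_le_of_not_mem {d : ℕ} (hd : 2 ≤ d) {t : ℝ} (ht : 0 < t) {Q : ℕ}
    {x : Fin (d-1) → ℝ} (h : x ∉ denLe d Q) :
    popcornFun t d x ≤ ((Q + 1 : ℕ) : ℝ) ^ (-t) := by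
  by_cases hx : ∃ q, IsRep d q x
  · obtain ⟨q, hx⟩ := hx
    have hq : Q + 1 ≤ q := by
      by_contra hc
      exact h ⟨q, by omega, hx⟩
    rw [popcornFun_of_isRep hd t hx]
    exact Real.rpow_le_rpow_of_nonpos (by positivity) (by exact_mod_cast hq) (by linarith)
  · rw [popcornFun_of_not t hx]; positivity

/-! ### Points of the graph and their heights -/

/-- The index of the last coordinate. -/
def lastIx {d : ℕ} (hd : 2 ≤ d) : Fin d := ⟨d - 1, by omega⟩

lemma graphPt_last {d : ℕ} (hd : 2 ≤ d) (t : ℝ) (x : Fin (d-1) → ℝ) :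
    graphPt t d x (lastIx hd) = popcornFun t d x := by
  simp [graphPt, mkPt, lastIx]

lemma mem_Gset_iff {d : ℕ} (t : ℝ) (w : EuclideanSpace ℝ (Fin d)) :
    w ∈ Gset t d ↔ ∃ x : Fin (d-1) → ℝ, (∀ i, x i ∈ Set.Icc (0:ℝ) 1) ∧ w = graphPt t d x := by
  constructor
  · rintro ⟨x, hx, h1, h2⟩
    refine ⟨x, hx, ?_⟩
    ext j
    by_cases hj : (j : ℕ) < d - 1
    · simpa [graphPt, mkPt, hj] using h1 ⟨j, hj⟩
    · simpa [graphPt, mkPt, hj] using h2 j (by omega)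
  · rintro ⟨x, hx, rfl⟩
    refine ⟨x, hx, fun i => ?_, fun j hj => ?_⟩
    · simp [graphPt, mkPt]
    · simp [graphPt, mkPt, hj]

lemma graphPt_injective {d : ℕ} (t : ℝ) : Function.Injective (graphPt t d) := by
  intro x y h
  funext i
  have := congrArg (fun w : EuclideanSpace ℝ (Fin d) => w (Fin.castLE (Nat.sub_le d 1) i)) h
  simpa [graphPt, mkPt] using this

lemma last_sub_le {d : ℕ} (hd : 2 ≤ d) (v w : EuclideanSpace ℝ (Fin d)) :
    |v (lastIx hd) - w (lastIx hd)| ≤ ‖v - w‖ := by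
  simpa using PiLp.norm_apply_le (v - w) (lastIx hd)

/-- Moving the first coordinate to a nearby irrational number lands on the zero level of the
graph. -/
lemma exists_irrational_near {d : ℕ} (hd : 2 ≤ d) (t : ℝ) {w : EuclideanSpace ℝ (Fin d)}
    (hw : w ∈ Gset t d) {ε : ℝ} (hε : 0 < ε) :
    ∃ v ∈ Gset t d, v ≠ w ∧ v (lastIx hd) = 0 ∧ ‖v - w‖ < ε + w (lastIx hd) := by
  obtain ⟨x, hx, rfl⟩ := (mem_Gset_iff t w).1 hw
  let i : Fin (d-1) := ⟨0, by omega⟩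
  obtain ⟨r, hr, hr01, hrx, hrε⟩ : ∃ r : ℝ, Irrational r ∧ r ∈ Set.Icc (0:ℝ) 1 ∧ r ≠ x i ∧
      |r - x i| < ε := by
    obtain ⟨hx0, hx1⟩ := hx i
    rcases lt_or_ge (x i) 1 with hlt | hge
    · obtain ⟨r, hr, ha, hb⟩ := exists_irrational_btwn
        (show x i < min 1 (x i + ε) from lt_min hlt (by linarith))
      have hb1 := hb.trans_le (min_le_left _ _)
      have hb2 := hb.trans_le (min_le_right _ _)
      exact ⟨r, hr, ⟨by linarith, hb1.le⟩, ha.ne', by rw [abs_lt]; constructor <;> linarith⟩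
    · obtain ⟨r, hr, ha, hb⟩ := exists_irrational_btwn
        (show max 0 (x i - ε) < x i from max_lt (by linarith) (by linarith))
      have ha1 := (le_max_left _ _).trans_lt ha
      have ha2 := (le_max_right _ _).trans_lt ha
      exact ⟨r, hr, ⟨ha1.le, by linarith⟩, hb.ne, by rw [abs_lt]; constructor <;> linarith⟩
  let y := Function.update x i r
  have hyi : y i = r := by simp [y]
  have hy0 : popcornFun t d y = 0 := popcornFun_of_irrational t (i := i) (by rwa [hyi])
  refine ⟨graphPt t d y, (mem_Gset_iff t _).2 ⟨y, ?_, rfl⟩, ?_, ?_, ?_⟩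
  · intro j
    by_cases hj : j = i
    · subst hj; rwa [hyi]
    · simpa [y, hj] using hx j
  · intro h
    apply hrx
    rw [← hyi, graphPt_injective t h]
  · rw [graphPt_last, hy0]
  · have key : graphPt t d y - graphPt t d x =
        EuclideanSpace.single (Fin.castLE (Nat.sub_le d 1) i) (r - x i) +
        EuclideanSpace.single (lastIx hd) (-popcornFun t d x) := by
      ext j
      by_cases hj : (j : ℕ) < d - 1
      · have hjl : j ≠ lastIx hd := by
          rintro rfl
          simp [lastIx] at hj
        by_cases hj0 : j = Fin.castLE (Nat.sub_le d 1) i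
        · subst hj0
          simp [graphPt, mkPt, hyi, hjl]
        · have : (⟨j, hj⟩ : Fin (d-1)) ≠ i := by
            intro h
            apply hj0
            rw [← h]
            rfl
          simp [graphPt, mkPt, hj, hjl, hj0, y, this]
      · have hjl : j = lastIx hd := by
          apply Fin.ext
          have := j.2
          simp only [lastIx]
          omega
        have hj0 : lastIx hd ≠ Fin.castLE (Nat.sub_le d 1) i := by
          intro h
          have := congrArg Fin.val h
          simp [lastIx, i] at this
          omega
        subst hjl
        simp [graphPt, mkPt, hj, hj0, hy0]
    rw [key, graphPt_last]
    refine (norm_add_le _ _).trans_lt ?_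
    rw [PiLp.norm_single, PiLp.norm_single, norm_neg, Real.norm_eq_abs,
      Real.norm_eq_abs, abs_of_nonneg (popcornFun_nonneg hd t x)]
    linarith

lemma height_nonneg {d : ℕ} (hd : 2 ≤ d) {t : ℝ} {w : EuclideanSpace ℝ (Fin d)}
    (hw : w ∈ Gset t d) : 0 ≤ w (lastIx hd) := by
  obtain ⟨x, -, rfl⟩ := (mem_Gset_iff t w).1 hw
  rw [graphPt_last]
  exact popcornFun_nonneg hd t x

/-! ### Isolated points and Lipschitz maps -/

lemma finite_height_ge {d : ℕ} (hd : 2 ≤ d) {t : ℝ} (ht : 0 < t) {h : ℝ} (hh : 0 < h) :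
    {w ∈ Gset t d | h ≤ w (lastIx hd)}.Finite := by
  have hlim : Tendsto (fun n : ℕ => ((n + 1 : ℕ) : ℝ) ^ (-t)) atTop (nhds 0) :=
    (tendsto_rpow_neg_atTop ht).comp
      (tendsto_natCast_atTop_atTop.comp (tendsto_add_atTop_nat 1))
  obtain ⟨Q, hQ⟩ := (hlim.eventually (gt_mem_nhds hh)).exists
  refine ((denLe_finite d Q).image (graphPt t d)).subset ?_
  rintro w ⟨hw, hwh⟩
  obtain ⟨x, -, rfl⟩ := (mem_Gset_iff t w).1 hw
  refine ⟨x, ?_, rfl⟩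
  by_contra hx
  rw [graphPt_last] at hwh
  have := popcornFun_le_of_not_mem hd ht hx
  linarith

/-- Points of positive height are isolated in the graph: near them the height stays bounded
below. -/
lemma not_accum_of_pos {d : ℕ} (hd : 2 ≤ d) {t : ℝ} (ht : 0 < t)
    {w : EuclideanSpace ℝ (Fin d)} (hw : 0 < w (lastIx hd)) : ¬ Accum (Gset t d) w := by
  intro hacc
  have hfin := (finite_height_ge hd ht (half_pos hw)).sdiff (t := {w})
  obtain ⟨ε, hε, hball⟩ := Metric.mem_nhds_iff.1
    (hfin.isClosed.isOpen_compl.mem_nhds (x := w) (by simp))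
  obtain ⟨v, hv, hne, hlt⟩ := hacc (min ε (w (lastIx hd) / 2)) (lt_min hε (half_pos hw))
  have h1 := (lt_min_iff.1 hlt).1
  have h2 := (lt_min_iff.1 hlt).2
  have h3 := (abs_le.1 (last_sub_le hd v w)).1
  refine hball (show v ∈ Metric.ball w ε by rwa [Metric.mem_ball, dist_eq_norm]) ⟨⟨hv, by linarith⟩, hne⟩

/-- An injective Lipschitz map between two graphs multiplies heights by at most a constant. -/
lemma height_image_le {d : ℕ} (hd : 2 ≤ d) {t₁ t₂ : ℝ} (h1 : 0 < t₁)
    {f : EuclideanSpace ℝ (Fin d) → EuclideanSpace ℝ (Fin d)} {c : ℝ} (hc : 0 < c)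
    (hmaps : Set.MapsTo f (Gset t₂ d) (Gset t₁ d)) (hinj : Set.InjOn f (Gset t₂ d))
    (hlip : ∀ x ∈ Gset t₂ d, ∀ y ∈ Gset t₂ d, ‖f x - f y‖ ≤ c * ‖x - y‖)
    {w : EuclideanSpace ℝ (Fin d)} (hw : w ∈ Gset t₂ d) :
    f w (lastIx hd) ≤ 2 * c * w (lastIx hd) := by
  have zero : ∀ v ∈ Gset t₂ d, v (lastIx hd) = 0 → f v (lastIx hd) = 0 := by
    intro v hv hv0
    by_contra hne
    have hpos := lt_of_le_of_ne (height_nonneg hd (hmaps hv)) (Ne.symm hne)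
    apply not_accum_of_pos hd h1 hpos
    intro ε hε
    obtain ⟨u, hu, huv, -, hlt⟩ := exists_irrational_near hd t₂ hv (div_pos hε hc)
    refine ⟨f u, hmaps hu, fun h => huv (hinj hu hv h), ?_⟩
    rw [hv0, add_zero, lt_div_iff₀ hc] at hlt
    linarith [hlip u hu v hv]
  rcases (height_nonneg hd hw).eq_or_lt with h0 | hpos
  · rw [zero w hw h0.symm, ← h0, mul_zero]
  · obtain ⟨v, hv, -, hv0, hlt⟩ := exists_irrational_near hd t₂ hw hpos
    have h3 := (abs_le.1 (last_sub_le hd (f v) (f w))).1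
    have h4 := mul_lt_mul_of_pos_left hlt hc
    rw [zero v hv hv0] at h3
    linarith [hlip v hv w hw]

/-- The point `(1/(Q+1), …, 1/(Q+1))` has denominator exactly `Q + 1`. -/
lemma denLe_ssubset {d : ℕ} (hd : 2 ≤ d) {Q : ℕ} (hQ : 1 ≤ Q) :
    denLe d Q ⊂ denLe d (Q + 1) := by
  refine ⟨fun x ⟨q, hq, hx⟩ => ⟨q, by omega, hx⟩, fun hsub => ?_⟩
  have hrep : IsRep d (Q + 1) (fun _ => ((1 : ℕ) : ℝ) / ((Q + 1 : ℕ) : ℝ)) :=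
    ⟨fun _ => 1, fun _ => ⟨le_rfl, by simp only; omega, by simp⟩, fun _ => rfl⟩
  obtain ⟨q, hq, hx⟩ := hsub ⟨Q + 1, le_rfl, hrep⟩
  have := isRep_unique hd hx hrep
  omega

/-! ### Counting denominators -/

/-- `G_{t₁,d}` and `G_{t₂,d}` are not bi-Lipschitz equivalent. -/
theorem popcorn_graphs_not_bilipschitz (d : ℕ) (hd : 2 ≤ d) (t₁ t₂ : ℝ)
    (h1 : 0 < t₁) (h12 : t₁ < t₂) (h2 : t₂ ≤ (d:ℝ)/((d:ℝ)-1)) :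
    ¬ ∃ (f : EuclideanSpace ℝ (Fin d) → EuclideanSpace ℝ (Fin d)) (c₁ c₂ : ℝ),
        0 < c₁ ∧ c₁ ≤ c₂ ∧ Set.BijOn f (Gset t₂ d) (Gset t₁ d) ∧
        ∀ x ∈ Gset t₂ d, ∀ y ∈ Gset t₂ d,
          c₁ * ‖x - y‖ ≤ ‖f x - f y‖ ∧ ‖f x - f y‖ ≤ c₂ * ‖x - y‖ := by
  rintro ⟨f, c₁, c₂, hc₁, hc₁₂, hbij, hlip⟩
  have hc : 0 < c₂ := hc₁.trans_le hc₁₂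
  have ht₂ : 0 < t₂ := h1.trans h12
  have hlim : Tendsto (fun n : ℕ => ((n + 1 : ℕ) : ℝ) ^ (t₂ - t₁)) atTop atTop :=
    (tendsto_rpow_atTop (sub_pos.2 h12)).comp
      (tendsto_natCast_atTop_atTop.comp (tendsto_add_atTop_nat 1))
  obtain ⟨Q, hQlarge, hQ⟩ :=
    ((hlim.eventually_gt_atTop (2 * c₂)).and (eventually_ge_atTop 1)).exists
  have hex : ∀ x ∈ denLe d (Q + 1), ∃ y ∈ denLe d Q, f (graphPt t₂ d y) = graphPt t₁ d x := by
    intro x hx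
    have hxcube : ∀ i, x i ∈ Set.Icc (0:ℝ) 1 := by
      obtain ⟨q, -, hq⟩ := hx
      exact isRep_mem_cube hq
    obtain ⟨w, hw, hfw⟩ := hbij.surjOn ((mem_Gset_iff t₁ _).2 ⟨x, hxcube, rfl⟩)
    have hle := height_image_le hd h1 hc hbij.mapsTo hbij.injOn
      (fun a ha b hb => (hlip a ha b hb).2) hw
    obtain ⟨y, -, rfl⟩ := (mem_Gset_iff t₂ w).1 hw
    refine ⟨y, ?_, hfw⟩
    by_contra hy
    rw [hfw, graphPt_last, graphPt_last] at hle
    have hlow := popcornFun_ge_of_mem hd h1 hx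
    have hup := popcornFun_le_of_not_mem hd ht₂ hy
    set M : ℝ := ((Q + 1 : ℕ) : ℝ)
    have hM : 0 < M := by positivity
    have hsplit : M ^ (-t₁) = M ^ (t₂ - t₁) * M ^ (-t₂) := by
      rw [← Real.rpow_add hM]
      congr 1
      ring
    have hMpos : 0 < M ^ (-t₂) := by positivity
    have h3 := mul_lt_mul_of_pos_right hQlarge hMpos
    have h4 : 2 * c₂ * popcornFun t₂ d y ≤ 2 * c₂ * M ^ (-t₂) :=
      mul_le_mul_of_nonneg_left hup (by positivity)
    linarith
  choose! g hg hfg using hex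
  have hginj : Set.InjOn g (denLe d (Q + 1)) := by
    intro a ha b hb hab
    apply graphPt_injective t₁
    rw [← hfg a ha, ← hfg b hb, hab]
  have hcard := Set.ncard_le_ncard_of_injOn g hg hginj (denLe_finite d Q)
  have hlt := Set.ncard_lt_ncard (denLe_ssubset hd hQ) (denLe_finite d (Q + 1))
  omega
end
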